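/- arXiv:2310.15462 — 3 statements merged into one kernel-verified Lean document; each statement's English description precedes it below -/
import Mathlib

section
/- Under Assumption 2.1 and with the multiple empirical integrals I_k^{(n)} defined from the triangular array, for all k_1, k_2 ≥ 0 with k_1 ≠ k_2 and all f ∈ L²(μ^{k_1}), g ∈ L²(μ^{k_2}), one has 𝔼[I_{k_1}^{(n)}(f) · I_{k_2}^{(n)}(g)] → 0 as n → ∞. -/
open MeasureTheory ProbabilityTheory Filter Topology
open scoped ENNReal NNReal

/-- **Assumption 2.1** of the paper, for data `(μ, a, P)`. -/
def Assumption21 {E : Type*} [MeasurableSpace E] (μ : Measure E) (a : ℕ → ℝ)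
    (P : ℕ → Measure E) : Prop :=
  μ Set.univ = ∞ ∧
  (∀ n : ℕ, 1 ≤ n → 0 < a n) ∧
  Tendsto a atTop atTop ∧
  Tendsto (fun n : ℕ => a n / n) atTop (𝓝 0) ∧
  (∀ B : Set E, MeasurableSet B → ∀ n : ℕ, 1 ≤ n →
    ENNReal.ofReal ((n : ℝ) / a n) * P n B ≤ ENNReal.ofReal (((n : ℝ) + 1) / a (n + 1)) * P (n + 1) B) ∧
  (∀ B : Set E, MeasurableSet B →
    Tendsto (fun n : ℕ => ENNReal.ofReal ((n : ℝ) / a n) * P n B) atTop (𝓝 (μ B)))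

/-- The positive (`true`) and negative (`false`) parts of the signed measure `√a · W_n`. -/
noncomputable def mixMeasure {E : Type*} [MeasurableSpace E] (P : Measure E) (n : ℕ)
    (X : Fin n → E) : Bool → Measure E
  | true => ∑ j : Fin n, Measure.dirac (X j)
  | false => (n : ℝ≥0) • P

/-- The multiple empirical integral `I_k^{(n)}(f)` for one realization `X` of the sample:
the integral of `f` over the off-diagonal set with respect to the `k`-fold product of the
signed measure `W_n = a^{-1/2} (Σ_j δ_{X_j} − n P)`, expanded multilinearly into its
positive and negative parts. -/
noncomputable def empInt {E : Type*} [MeasurableSpace E] (P : Measure E)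
    (n : ℕ) (a : ℝ) (X : Fin n → E) (k : ℕ) (f : (Fin k → E) → ℝ) : ℝ :=
  (Real.sqrt a)⁻¹ ^ k *
    ∑ ε : Fin k → Bool,
      (-1 : ℝ) ^ (Finset.univ.filter fun i => ε i = false).card *
        ∫ u in {u : Fin k → E | Function.Injective u}, f u
          ∂(Measure.pi fun i => mixMeasure P n X (ε i))


section helpers

theorem aux_mp_comp {E : Type*} [MeasurableSpace E] (P : Measure E) [IsProbabilityMeasure P]
    {ι κ : Type*} [Fintype ι] [Fintype κ] (γ : κ → ι) (hγ : Function.Injective γ) :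
    MeasurePreserving (fun (z : ι → E) i => z (γ i)) (Measure.pi fun _ : ι => P)
      (Measure.pi fun _ : κ => P) := by
  refine ⟨by fun_prop, ?_⟩
  have h1 : iIndepFun (fun (i : ι) (z : ι → E) => z i) (Measure.pi fun _ : ι => P) :=
    iIndepFun_pi (X := fun _ x => x) (fun _ => aemeasurable_id)
  have h2 := h1.precomp hγ
  rw [iIndepFun_iff_map_fun_eq_pi_map (fun i => (measurable_pi_apply _).aemeasurable)] at h2
  rw [h2]
  congr 1
  ext1 i
  exact (measurePreserving_eval (fun _ : ι => P) (γ i)).map_eq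

theorem aux_pi_le {E : Type*} [MeasurableSpace E] (P μ : Measure E) [IsProbabilityMeasure P]
    [SigmaFinite μ] (c : ℝ≥0) (hP : ∀ s, MeasurableSet s → P s ≤ c * μ s)
    (k : ℕ) :
    (Measure.pi fun _ : Fin k => P) ≤ (c ^ k) • (Measure.pi fun _ : Fin k => μ) := by
  have hle : P ≤ c • μ := by
    refine Measure.le_iff.2 fun s hs => ?_
    exact hP s hs
  have h1 : (c ^ k) • (Measure.pi fun _ : Fin k => μ) = Measure.pi fun _ : Fin k => c • μ := by
    refine (Measure.pi_eq fun s hs => ?_).symm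
    change ((c ^ k : ℝ≥0) : ℝ≥0∞) * (Measure.pi fun _ : Fin k => μ) (Set.univ.pi s) =
      ∏ i, ((c : ℝ≥0∞) * μ (s i))
    rw [Measure.pi_pi, Finset.prod_mul_distrib]
    simp
  rw [h1]
  refine Measure.le_iff.2 fun s hs => ?_
  have h2 : (Measure.pi fun _ : Fin k => P).toOuterMeasure ≤
      OuterMeasure.pi fun _ : Fin k => (c • μ).toOuterMeasure := by
    rw [OuterMeasure.le_pi]
    intro t _
    refine (Measure.pi_pi (fun _ : Fin k => P) t).le.trans ?_
    exact Finset.prod_le_prod' fun i _ => hle _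
  calc _ ≤ (OuterMeasure.pi fun _ : Fin k => (c • μ).toOuterMeasure) s := h2 s
    _ ≤ _ := by
      rw [Measure.pi]
      exact le_toMeasure_apply _ _ _

theorem aux_pi_sum {E : Type*} [MeasurableSpace E] {κ : Type*} [Fintype κ] [DecidableEq κ]
    {n : ℕ} (ν : κ → Fin n → Measure E) [∀ i j, IsFiniteMeasure (ν i j)] :
    Measure.pi (fun i => ∑ j, ν i j) = ∑ j : κ → Fin n, Measure.pi fun i => ν i (j i) := by
  refine Measure.pi_eq fun s hs => ?_
  simp [Measure.finsetSum_apply, Finset.prod_univ_sum]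

/-- Cauchy-Schwarz. -/
theorem aux_cs {α : Type*} [MeasurableSpace α] (m : Measure α) (u v : α → ℝ)
    (hu : MemLp u 2 m) (hv : MemLp v 2 m) :
    ∫ x, |u x| * |v x| ∂m ≤ √(∫ x, u x ^ 2 ∂m) * √(∫ x, v x ^ 2 ∂m) := by
  have := integral_mul_le_Lp_mul_Lq_of_nonneg (μ := m) Real.HolderConjugate.two_two
    (f := fun x => |u x|) (g := fun x => |v x|) (ae_of_all _ fun x => abs_nonneg _)
    (ae_of_all _ fun x => abs_nonneg _) (by simpa using hu.norm) (by simpa using hv.norm)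
  simpa [Real.sqrt_eq_rpow] using this

theorem aux_card (K n : ℕ) (κ : Type*) [Fintype κ] [DecidableEq κ] (hK : Fintype.card κ = K)
    (hn : 1 ≤ n) :
    ((Finset.univ.filter fun j : κ → Fin n => ∀ i, ∃ i', i' ≠ i ∧ j i' = j i).card : ℝ) ≤
      (K : ℝ) ^ K * √n ^ K := by
  classical
  set r := K / 2 with hr
  have himg : ∀ j : κ → Fin n, (∀ i, ∃ i', i' ≠ i ∧ j i' = j i) →
      (Finset.univ.image j).card ≤ r := by
    intro j hj
    have h1 : 2 * (Finset.univ.image j).card ≤ (Finset.univ : Finset κ).card := by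
      refine Finset.mul_card_image_le_card Finset.univ 2 ?_
      intro b hb
      obtain ⟨i, -, rfl⟩ := Finset.mem_image.1 hb
      obtain ⟨i', hi', hji⟩ := hj i
      exact Finset.one_lt_card.2 ⟨i', by simp [hji], i, by simp, hi'⟩
    rw [Finset.card_univ, hK] at h1
    omega
  have hcard : (Finset.univ.filter fun j : κ → Fin n => ∀ i, ∃ i', i' ≠ i ∧ j i' = j i).card ≤
      (Finset.univ : Finset ((κ → Fin r) × (Fin r → Fin n))).card := by
    refine Finset.card_le_card_of_surjOn (fun p => p.2 ∘ p.1) ?_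
    intro j hj
    have hj' := himg j (by simpa using hj)
    obtain ⟨e⟩ := Function.Embedding.nonempty_of_card_le
      (α := (Finset.univ.image j : Finset (Fin n))) (β := Fin r) (by rw [Fintype.card_coe, Fintype.card_fin]; exact hj')
    refine ⟨(fun i => e ⟨j i, by simp⟩, Function.extend e Subtype.val (fun _ => ⟨0, hn⟩)), by simp, ?_⟩
    funext i
    simp [e.injective.extend_apply]
  have hc2 : (Finset.univ : Finset ((κ → Fin r) × (Fin r → Fin n))).card = r ^ K * n ^ r := by
    simp [hK]
  rw [hc2] at hcard
  have hsq : (1 : ℝ) ≤ √n := by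
    rw [Real.one_le_sqrt]; exact_mod_cast hn
  calc _ ≤ ((r ^ K * n ^ r : ℕ) : ℝ) := by exact_mod_cast hcard
    _ = (r : ℝ) ^ K * √n ^ (2 * r) := by
      rw [pow_mul, Real.sq_sqrt (by positivity)]; push_cast; rfl
    _ ≤ _ := by
      have : (r : ℝ) ≤ K := by exact_mod_cast Nat.div_le_self K 2
      have h2 : 2 * r ≤ K := by omega
      gcongr

/-- Index map: coordinate `i` reads sample `j i` if `ε i`, otherwise its own fresh coordinate. -/
def auxIdx {K : Type*} {n : ℕ} (ε : K → Bool) (j : K → Fin n) (i : K) : Fin n ⊕ K :=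
  if ε i = true then Sum.inl (j i) else Sum.inr i

theorem aux_mp_prod {E : Type*} [MeasurableSpace E] (P : Measure E) [IsProbabilityMeasure P]
    {ι κ K : Type*} [Fintype ι] [Fintype κ] [Fintype K] (γ : K → ι ⊕ κ)
    (hγ : Function.Injective γ) :
    MeasurePreserving (fun (z : (ι → E) × (κ → E)) i => Sum.elim z.1 z.2 (γ i))
      ((Measure.pi fun _ : ι => P).prod (Measure.pi fun _ : κ => P))
      (Measure.pi fun _ : K => P) := by
  have h1 := measurePreserving_sumPiEquivProdPi_symm (X := fun _ : ι ⊕ κ => E) (fun _ => P)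
  have h2 := (aux_mp_comp P γ hγ).comp h1
  have h3 : (fun (z : (ι → E) × (κ → E)) i => Sum.elim z.1 z.2 (γ i)) =
      (fun (z : ι ⊕ κ → E) i => z (γ i)) ∘
        (MeasurableEquiv.sumPiEquivProdPi (fun _ : ι ⊕ κ => E)).symm := by
    funext z i
    simp only [Function.comp, MeasurableEquiv.coe_sumPiEquivProdPi_symm,
      Equiv.sumPiEquivProdPi_symm_apply]
    cases γ i <;> rfl
  rw [h3]
  exact h2

theorem aux_meas_elim {E : Type*} [MeasurableSpace E]
    {ι κ K : Type*} (γ : K → ι ⊕ κ) :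
    Measurable (fun (z : (ι → E) × (κ → E)) i => Sum.elim z.1 z.2 (γ i)) := by
  refine measurable_pi_lambda _ fun i => ?_
  cases h : γ i with
  | inl a => simp only [Sum.elim_inl]; fun_prop
  | inr a => simp only [Sum.elim_inr]; fun_prop

/-- one term of the multilinear expansion -/
noncomputable def auxM {E : Type*} [MeasurableSpace E] (P : Measure E) {n k : ℕ}
    (x : Fin n → E) (ε : Fin k → Bool) (j : Fin k → Fin n) : Measure (Fin k → E) :=
  Measure.pi fun i => if ε i = true then Measure.dirac (x (j i)) else P

theorem auxM_eq {E : Type*} [MeasurableSpace E] (P : Measure E) [IsProbabilityMeasure P] {n k : ℕ}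
    (x : Fin n → E) (ε : Fin k → Bool) (j : Fin k → Fin n) :
    auxM P x ε j = (Measure.pi fun _ : Fin k => P).map
      (fun y i => Sum.elim x y (auxIdx ε j i)) := by
  have h1 : (fun (y : Fin k → E) i => Sum.elim x y (auxIdx ε j i)) =
      fun y i => (fun i (e : E) => if ε i = true then x (j i) else e) i (y i) := by
    funext y i
    by_cases h : ε i = true <;> simp [auxIdx, h]
  have hm : ∀ i, Measurable (fun (e : E) => if ε i = true then x (j i) else e) := by
    intro i
    by_cases h : ε i = true <;> simp [h]
    fun_prop
  have : ∀ i, IsProbabilityMeasure (P.map (fun (e : E) => if ε i = true then x (j i) else e)) :=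
    fun i => Measure.isProbabilityMeasure_map (hm i).aemeasurable
  rw [h1, Measure.pi_map_pi (fun i => (hm i).aemeasurable), auxM]
  congr 1
  funext i
  by_cases h : ε i = true
  · simp [h]
  · simp [h]

theorem auxM_ae {E : Type*} [MeasurableSpace E] (P : Measure E) [IsProbabilityMeasure P] {n k : ℕ}
    (hinj : MeasurableSet {u : Fin k → E | Function.Injective u})
    (f F : (Fin k → E) → ℝ) (hFm : Measurable F)
    (hF2 : MemLp F 2 (Measure.pi fun _ : Fin k => P))
    (hF0 : ∀ u, ¬ Function.Injective u → F u = 0)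
    (hfF : ∀ᵐ u ∂(Measure.pi fun _ : Fin k => P), Function.Injective u → f u = F u)
    (ε : Fin k → Bool) (j : Fin k → Fin n) :
    ∀ᵐ x ∂(Measure.pi fun _ : Fin n => P), Integrable F (auxM P x ε j) ∧
      ∀ᵐ u ∂(auxM P x ε j), {u | Function.Injective u}.indicator f u = F u := by
  classical
  have hmx : ∀ x : Fin n → E, Measurable
      (fun (y : Fin k → E) i => Sum.elim x y (auxIdx ε j i)) := fun x =>
    (aux_meas_elim (E := E) (auxIdx ε j)).comp (measurable_prodMk_left (x := x))
  by_cases hγ : Function.Injective (auxIdx ε j)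
  · have mp := aux_mp_prod P (auxIdx ε j) hγ
    have h1 : Integrable (fun z : (Fin n → E) × (Fin k → E) =>
        F (fun i => Sum.elim z.1 z.2 (auxIdx ε j i)))
        ((Measure.pi fun _ : Fin n => P).prod (Measure.pi fun _ : Fin k => P)) :=
      mp.integrable_comp_of_integrable (hF2.integrable (by norm_num))
    obtain ⟨N, hN, hNm, hN0⟩ := exists_measurable_superset_of_null hfF
    have h2 : ∀ᵐ u ∂(Measure.pi fun _ : Fin k => P), u ∉ N := measure_eq_zero_iff_ae_notMem.1 hN0
    have h3 := mp.quasiMeasurePreserving.ae h2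
    have h4 := Measure.ae_ae_of_ae_prod h3
    filter_upwards [h1.prod_right_ae, h4] with x hx1 hx2
    rw [auxM_eq]
    refine ⟨(integrable_map_measure hFm.aestronglyMeasurable (hmx x).aemeasurable).2 hx1, ?_⟩
    have h5 : ∀ᵐ u ∂((Measure.pi fun _ : Fin k => P).map
      (fun y i => Sum.elim x y (auxIdx ε j i))), u ∉ N :=
      (ae_map_iff (hmx x).aemeasurable hNm.compl).2 hx2
    filter_upwards [h5] with u hu
    by_cases hui : Function.Injective u
    · rw [Set.indicator_of_mem (by exact hui)]
      by_contra hcon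
      exact hu (hN (fun h => hcon (h hui)))
    · rw [Set.indicator_of_notMem (by exact hui), hF0 u hui]
  · refine ae_of_all _ fun x => ?_
    have h0 : ∀ᵐ u ∂(auxM P x ε j), ¬ Function.Injective u := by
      rw [auxM_eq]
      refine (ae_map_iff (hmx x).aemeasurable hinj.compl).2 ?_
      refine ae_of_all _ fun y hy => hγ ?_
      intro i i' h
      exact hy (by simp [h])
    refine ⟨?_, ?_⟩
    · refine (integrable_zero _ _ _).congr (h0.mono fun u hu => (hF0 u hu).symm)
    · filter_upwards [h0] with u hu
      rw [Set.indicator_of_notMem (by exact hu), hF0 u hu]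

theorem aux_rep {E : Type*} [MeasurableSpace E] (P : Measure E) [IsProbabilityMeasure P] {n k : ℕ}
    (a : ℝ)
    (hinj : MeasurableSet {u : Fin k → E | Function.Injective u})
    (f F : (Fin k → E) → ℝ) (hFm : Measurable F)
    (hF2 : MemLp F 2 (Measure.pi fun _ : Fin k => P))
    (hF0 : ∀ u, ¬ Function.Injective u → F u = 0)
    (hfF : ∀ᵐ u ∂(Measure.pi fun _ : Fin k => P), Function.Injective u → f u = F u) :
    ∀ᵐ x ∂(Measure.pi fun _ : Fin n => P), empInt P n a x k f =
      (√a)⁻¹ ^ k * ∑ ε : Fin k → Bool,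
        (-1 : ℝ) ^ (Finset.univ.filter fun i => ε i = false).card * ∑ j : Fin k → Fin n,
          ∫ y, F (fun i => Sum.elim x y (auxIdx ε j i)) ∂(Measure.pi fun _ : Fin k => P) := by
  have hall : ∀ᵐ x ∂(Measure.pi fun _ : Fin n => P), ∀ ε j, Integrable F (auxM P x ε j) ∧
      ∀ᵐ u ∂(auxM P x ε j), {u | Function.Injective u}.indicator f u = F u :=
    ae_all_iff.2 fun ε => ae_all_iff.2 fun j => auxM_ae P hinj f F hFm hF2 hF0 hfF ε j
  filter_upwards [hall] with x hx
  rw [empInt]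
  congr 1
  refine Finset.sum_congr rfl fun ε _ => ?_
  congr 1
  have hmx : ∀ j, Measurable
      (fun (y : Fin k → E) i => Sum.elim x y (auxIdx ε j i)) := fun j =>
    (aux_meas_elim (E := E) (auxIdx ε j)).comp (measurable_prodMk_left (x := x))
  have hmix : (Measure.pi fun i => mixMeasure P n x (ε i)) = ∑ j, auxM P x ε j := by
    have : (fun i => mixMeasure P n x (ε i)) =
        fun i => ∑ j : Fin n, if ε i = true then Measure.dirac (x j) else P := by
      funext i
      cases h : ε i with
      | true => simp [mixMeasure]
      | false => simp [mixMeasure]; ext s; simp [ENNReal.smul_def]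
    rw [this]
    have : ∀ (i : Fin k) (j : Fin n),
        IsFiniteMeasure (if ε i = true then Measure.dirac (x j) else P) := by
      intro i j; split_ifs <;> infer_instance
    exact aux_pi_sum (fun i j => if ε i = true then Measure.dirac (x j) else P)
  rw [← integral_indicator hinj, hmix, integral_finsetSum_measure]
  · refine Finset.sum_congr rfl fun j _ => ?_
    rw [integral_congr_ae (hx ε j).2, auxM_eq, integral_map (hmx j).aemeasurable
      hFm.aestronglyMeasurable]
  · intro j _
    exact (hx ε j).1.congr ((hx ε j).2.mono fun u hu => hu.symm)

noncomputable def auxQ {E : Type*} [MeasurableSpace E] (P : Measure E) {K : Type*} [Fintype K]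
    {n : ℕ} (H : (K → E) → ℝ) (γ : K → Fin n ⊕ K) : ℝ :=
  ∫ z : Fin n ⊕ K → E, H (fun i => z (γ i)) ∂(Measure.pi fun _ : Fin n ⊕ K => P)

noncomputable def auxSgn {K : Type*} [Fintype K] (ε : K → Bool) : ℝ :=
  ∏ i, if ε i = false then (-1 : ℝ) else 1

theorem auxSgn_eq {K : Type*} [Fintype K] (ε : K → Bool) :
    auxSgn ε = (-1 : ℝ) ^ (Finset.univ.filter fun i => ε i = false).card := by
  simp [auxSgn, Finset.prod_ite]

theorem auxSgn_abs {K : Type*} [Fintype K] (ε : K → Bool) : |auxSgn ε| = 1 := by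
  simp [auxSgn_eq]

theorem auxSgn_sum {K L : Type*} [Fintype K] [Fintype L] (ε : K ⊕ L → Bool) :
    auxSgn ε = auxSgn (fun i => ε (Sum.inl i)) * auxSgn (fun i => ε (Sum.inr i)) := by
  simp [auxSgn, Fintype.prod_sum_type]

theorem auxSgn_flip {K : Type*} [Fintype K] [DecidableEq K] (ε : K → Bool) (i0 : K) :
    auxSgn (Function.update ε i0 (!ε i0)) = - auxSgn ε := by
  rw [auxSgn, auxSgn, ← Finset.mul_prod_erase _ _ (Finset.mem_univ i0),
    ← Finset.mul_prod_erase Finset.univ (fun i => if ε i = false then (-1 : ℝ) else 1)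
      (Finset.mem_univ i0), ← neg_mul]
  congr 1
  · cases h : ε i0 <;> simp
  · refine Finset.prod_congr rfl fun i hi => ?_
    rw [Function.update_of_ne (Finset.ne_of_mem_erase hi)]

theorem aux_vanish {E : Type*} [MeasurableSpace E] (P : Measure E) [IsProbabilityMeasure P]
    {K : Type*} [Fintype K] [DecidableEq K]
    {n : ℕ} (H : (K → E) → ℝ) (hH : Measurable H) (j : K → Fin n) (i0 : K)
    (hi0 : ∀ i, i ≠ i0 → j i ≠ j i0) :
    ∑ ε : K → Bool, auxSgn ε * auxQ P H (auxIdx ε j) = 0 := by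
  refine Finset.sum_involution (fun ε _ => Function.update ε i0 (!ε i0)) ?_ ?_ ?_ ?_
  · intro ε _
    have : auxQ P H (auxIdx (Function.update ε i0 (!ε i0)) j) = auxQ P H (auxIdx ε j) := by
      have hσ := aux_mp_comp P (Equiv.swap (Sum.inl (j i0) : Fin n ⊕ K) (Sum.inr i0))
        (Equiv.injective _)
      conv_rhs => rw [auxQ, ← hσ.map_eq]
      rw [integral_map hσ.measurable.aemeasurable
        (Measurable.aestronglyMeasurable (by fun_prop))]
      rw [auxQ]
      congr 1
      funext z
      congr 1
      funext i
      congr 1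
      by_cases hi : i = i0
      · subst hi
        cases h : ε i <;> simp [auxIdx, h]
      · have h2 := hi0 i hi
        cases h : ε i <;> simp [auxIdx, h, hi]
        · rw [Equiv.swap_apply_of_ne_of_ne] <;> simp [hi]
        · rw [Equiv.swap_apply_of_ne_of_ne] <;> simp [h2]
    rw [this, auxSgn_flip]; ring
  · intro ε _ _ h
    have := congrFun h i0
    simp at this
  · simp
  · intro ε _
    simp

theorem aux_memLp {E : Type*} [MeasurableSpace E] (P : Measure E) [IsProbabilityMeasure P]
    {ι : Type*} [Fintype ι] {k : ℕ} (F : (Fin k → E) → ℝ)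
    (hF2 : MemLp F 2 (Measure.pi fun _ : Fin k => P))
    (hF0 : ∀ u, ¬ Function.Injective u → F u = 0) (α : Fin k → ι) :
    MemLp (fun z : ι → E => F (fun i => z (α i))) 2 (Measure.pi fun _ : ι => P) ∧
    ∫ z : ι → E, F (fun i => z (α i)) ^ 2 ∂(Measure.pi fun _ : ι => P) ≤
      ∫ u, F u ^ 2 ∂(Measure.pi fun _ : Fin k => P) := by
  by_cases hα : Function.Injective α
  · have mp := aux_mp_comp P α hα
    refine ⟨hF2.comp_measurePreserving mp, ?_⟩
    rw [← mp.map_eq, integral_map mp.measurable.aemeasurable]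
    rw [mp.map_eq]
    exact hF2.1.pow 2
  · have : ∀ z : ι → E, F (fun i => z (α i)) = 0 := fun z => hF0 _ fun h => hα
      fun i i' hii => h (by simp [hii])
    simp only [this]
    refine ⟨MemLp.zero, ?_⟩
    simp
    exact integral_nonneg fun u => sq_nonneg _

theorem aux_indep {E : Type*} [MeasurableSpace E] (P : Measure E) [IsProbabilityMeasure P]
    {ι : Type*} [Fintype ι] {k : ℕ} (G : (Fin k → E) → ℝ) (hGm : Measurable G)
    (hG2 : MemLp G 2 (Measure.pi fun _ : Fin k => P))
    (hG0 : ∀ u, ¬ Function.Injective u → G u = 0) (β : Fin k → ι) (l : ι) (hl : ∀ i, β i ≠ l)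
    (A : Set E) (hA : MeasurableSet A) :
    MemLp (fun z : ι → E => A.indicator 1 (z l) * G (fun i => z (β i))) 2
      (Measure.pi fun _ : ι => P) ∧
    ∫ z : ι → E, (A.indicator 1 (z l) * G (fun i => z (β i))) ^ 2 ∂(Measure.pi fun _ : ι => P) ≤
      P.real A * ∫ u, G u ^ 2 ∂(Measure.pi fun _ : Fin k => P) := by
  have hind : Measurable (A.indicator (1 : E → ℝ)) := measurable_one.indicator hA
  constructor
  · refine (aux_memLp P G hG2 hG0 β).1.of_le (Measurable.aestronglyMeasurable (by fun_prop)) ?_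
    refine ae_of_all _ fun z => ?_
    by_cases h : z l ∈ A <;> simp [h]
  by_cases hβ : Function.Injective β
  · have hγ : Function.Injective (Sum.elim (fun _ : Unit => l) β) :=
      Function.Injective.sumElim (fun _ _ _ => rfl) hβ (fun _ b => (hl b).symm)
    have mp := (measurePreserving_sumPiEquivProdPi (X := fun _ : Unit ⊕ Fin k => E)
      (fun _ => P)).comp (aux_mp_comp P _ hγ)
    have key : ∫ p : (Unit → E) × (Fin k → E), (A.indicator 1 (p.1 ()) : ℝ) * (G p.2 ^ 2)
        ∂((Measure.pi fun _ : Unit => P).prod (Measure.pi fun _ : Fin k => P)) =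
        ∫ z : ι → E, (A.indicator 1 (z l) * G (fun i => z (β i))) ^ 2
          ∂(Measure.pi fun _ : ι => P) := by
      rw [← mp.map_eq, integral_map mp.measurable.aemeasurable
        (Measurable.aestronglyMeasurable (by fun_prop))]
      congr 1
      funext z
      have e1 : (((MeasurableEquiv.sumPiEquivProdPi fun _ : Unit ⊕ Fin k => E) ∘
        fun (z : ι → E) i => z (Sum.elim (fun _ : Unit => l) β i)) z) =
        (fun _ => z l, fun i => z (β i)) := rfl
      rw [e1]
      by_cases h : z l ∈ A <;> simp [h]
    rw [← key, integral_prod_mul (fun q : Unit → E => (A.indicator 1 (q ()) : ℝ))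
      (fun u => G u ^ 2)]
    have mpe := measurePreserving_eval (fun _ : Unit => P) ()
    have : ∫ q : Unit → E, (A.indicator 1 (q ()) : ℝ) ∂(Measure.pi fun _ : Unit => P) =
        P.real A := by
      rw [← integral_indicator_one hA]
      conv_rhs => rw [← mpe.map_eq]
      rw [integral_map mpe.measurable.aemeasurable hind.aestronglyMeasurable]
    rw [this]
  · have : ∀ z : ι → E, G (fun i => z (β i)) = 0 := fun z => hG0 _ fun h => hβ
      fun i i' hii => h (by simp [hii])
    simp only [this]
    simp
    have := integral_nonneg (μ := Measure.pi fun _ : Fin k => P) (f := fun u => G u ^ 2) fun u => sq_nonneg _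
    positivity

/-- the tensor product of two kernels -/
def auxH {E : Type*} {k1 k2 : ℕ} (F : (Fin k1 → E) → ℝ) (G : (Fin k2 → E) → ℝ)
    (u : Fin k1 ⊕ Fin k2 → E) : ℝ :=
  F (fun i => u (Sum.inl i)) * G (fun i => u (Sum.inr i))

theorem aux_bound {E : Type*} [MeasurableSpace E] (P : Measure E) [IsProbabilityMeasure P]
    {k1 k2 n : ℕ} (F : (Fin k1 → E) → ℝ) (G : (Fin k2 → E) → ℝ)
    (hGm : Measurable G)
    (hF2 : MemLp F 2 (Measure.pi fun _ : Fin k1 => P))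
    (hG2 : MemLp G 2 (Measure.pi fun _ : Fin k2 => P))
    (hF0 : ∀ u, ¬ Function.Injective u → F u = 0)
    (hG0 : ∀ u, ¬ Function.Injective u → G u = 0)
    (A : Set E) (hA : MeasurableSet A)
    (e : Fin k1 ⊕ Fin k2 → Bool) (J : Fin k1 ⊕ Fin k2 → Fin n)
    (hJ : ¬ Function.Injective (fun i => J (Sum.inl i))) :
    |auxQ P (auxH F G) (auxIdx e J)| ≤
      √(∫ u, ((Set.univ.pi fun _ => A)ᶜ.indicator F u) ^ 2 ∂(Measure.pi fun _ : Fin k1 => P)) *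
        √(∫ u, G u ^ 2 ∂(Measure.pi fun _ : Fin k2 => P)) +
      √(∫ u, F u ^ 2 ∂(Measure.pi fun _ : Fin k1 => P)) *
        √(P.real A * ∫ u, G u ^ 2 ∂(Measure.pi fun _ : Fin k2 => P)) := by
  set α : Fin k1 → Fin n ⊕ (Fin k1 ⊕ Fin k2) := fun i => auxIdx e J (Sum.inl i) with hα
  set β : Fin k2 → Fin n ⊕ (Fin k1 ⊕ Fin k2) := fun i => auxIdx e J (Sum.inr i) with hβ
  by_cases hαi : Function.Injective α
  swap
  · have : ∀ z : Fin n ⊕ (Fin k1 ⊕ Fin k2) → E, F (fun i => z (α i)) = 0 :=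
      fun z => hF0 _ fun h => hαi fun i i' hii => h (by simp [hii])
    have h0 : auxQ P (auxH F G) (auxIdx e J) = 0 := by
      have h1 : ∀ z : Fin n ⊕ (Fin k1 ⊕ Fin k2) → E,
          auxH F G (fun i => z (auxIdx e J i)) = 0 := by
        intro z
        have := this z
        simp only [hα] at this
        simp [auxH, this]
      simp [auxQ, h1]
    rw [h0, abs_zero]
    positivity
  obtain ⟨i0, hi0⟩ : ∃ i0, e (Sum.inl i0) = false := by
    by_contra! hcon
    apply hJ
    intro i i' hii
    apply hαi
    have h1 := hcon i
    have h2 := hcon i'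
    simp at h1 h2 hii
    simp [hα, auxIdx, h1, h2, hii]
  have hαi0 : α i0 = Sum.inr (Sum.inl i0) := by simp [hα, auxIdx, hi0]
  have hl : ∀ i, β i ≠ α i0 := by
    intro i
    rw [hαi0]
    cases h : e (Sum.inr i) <;> simp [hβ, auxIdx, h]
  set m := Measure.pi fun _ : Fin n ⊕ (Fin k1 ⊕ Fin k2) => P with hm
  set B : Set (Fin k1 → E) := (Set.univ.pi fun _ => A)ᶜ with hB
  have hBm : MeasurableSet B := (MeasurableSet.univ_pi fun _ => hA).compl
  set Fr := B.indicator F with hFr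
  have hFr2 : MemLp Fr 2 (Measure.pi fun _ : Fin k1 => P) := hF2.indicator hBm
  have hFr0 : ∀ u, ¬ Function.Injective u → Fr u = 0 := by
    intro u hu
    simp [hFr, hF0 u hu]
  obtain ⟨f1, f2⟩ := aux_memLp P F hF2 hF0 α
  obtain ⟨g1, g2⟩ := aux_memLp P G hG2 hG0 β
  obtain ⟨r1, r2⟩ := aux_memLp P Fr hFr2 hFr0 α
  obtain ⟨t1, t2⟩ := aux_indep P G hGm hG2 hG0 β (α i0) hl A hA
  have c1 := aux_cs m _ _ r1 g1
  have c2 := aux_cs m _ _ f1 t1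
  have i1 := r1.abs.integrable_mul g1.abs
  have i2 := f1.abs.integrable_mul t1.abs
  calc |auxQ P (auxH F G) (auxIdx e J)|
      ≤ ∫ z, |auxH F G (fun i => z (auxIdx e J i))| ∂m := abs_integral_le_integral_abs
    _ ≤ ∫ z, (|Fr (fun i => z (α i))| * |G (fun i => z (β i))| +
        |F (fun i => z (α i))| * |A.indicator 1 (z (α i0)) * G (fun i => z (β i))|) ∂m := by
      refine integral_mono_of_nonneg (ae_of_all _ fun z => abs_nonneg _) (i1.add i2)
        (ae_of_all _ fun z => ?_)
      have e1 : auxH F G (fun i => z (auxIdx e J i)) =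
        F (fun i => z (α i)) * G (fun i => z (β i)) := rfl
      simp only [e1, abs_mul]
      by_cases hz : (fun i => z (α i)) ∈ B
      · rw [hFr, Set.indicator_of_mem hz]
        have : 0 ≤ |F (fun i => z (α i))| * (|(A.indicator 1 (z (α i0)) : ℝ)| *
          |G (fun i => z (β i))|) := by positivity
        linarith
      · have hz' : z (α i0) ∈ A := by
          simp [hB] at hz
          exact hz i0
        rw [hFr, Set.indicator_of_notMem hz, Set.indicator_of_mem hz']
        simp
    _ = _ := integral_add i1 i2
    _ ≤ _ := by
      refine add_le_add (c1.trans ?_) (c2.trans ?_)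
      · gcongr
      · gcongr

theorem aux_term {E : Type*} [MeasurableSpace E] (P : Measure E) [IsProbabilityMeasure P]
    {k1 k2 n : ℕ} (F : (Fin k1 → E) → ℝ) (G : (Fin k2 → E) → ℝ)
    (hFm : Measurable F) (hGm : Measurable G)
    (hF2 : MemLp F 2 (Measure.pi fun _ : Fin k1 => P))
    (hG2 : MemLp G 2 (Measure.pi fun _ : Fin k2 => P))
    (hF0 : ∀ u, ¬ Function.Injective u → F u = 0)
    (hG0 : ∀ u, ¬ Function.Injective u → G u = 0)
    (e : Fin k1 ⊕ Fin k2 → Bool) (J : Fin k1 ⊕ Fin k2 → Fin n) :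
    Integrable (fun x : Fin n → E =>
      (∫ y, F (fun i => Sum.elim x y (auxIdx (fun i => e (Sum.inl i)) (fun i => J (Sum.inl i)) i))
        ∂(Measure.pi fun _ : Fin k1 => P)) *
      (∫ y, G (fun i => Sum.elim x y (auxIdx (fun i => e (Sum.inr i)) (fun i => J (Sum.inr i)) i))
        ∂(Measure.pi fun _ : Fin k2 => P))) (Measure.pi fun _ : Fin n => P) ∧
    ∫ x : Fin n → E,
      (∫ y, F (fun i => Sum.elim x y (auxIdx (fun i => e (Sum.inl i)) (fun i => J (Sum.inl i)) i))
        ∂(Measure.pi fun _ : Fin k1 => P)) *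
      (∫ y, G (fun i => Sum.elim x y (auxIdx (fun i => e (Sum.inr i)) (fun i => J (Sum.inr i)) i))
        ∂(Measure.pi fun _ : Fin k2 => P)) ∂(Measure.pi fun _ : Fin n => P) =
      auxQ P (auxH F G) (auxIdx e J) := by
  have hHm : Measurable (auxH F G) := by
    unfold auxH; fun_prop
  have hmp := aux_mp_prod P (ι := Fin n) (κ := Fin k1 ⊕ Fin k2) id Function.injective_id
  have hint : Integrable (fun z : Fin n ⊕ (Fin k1 ⊕ Fin k2) → E =>
      auxH F G (fun i => z (auxIdx e J i))) (Measure.pi fun _ => P) :=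
    (aux_memLp P F hF2 hF0 (fun i => auxIdx e J (Sum.inl i))).1.integrable_mul
      (aux_memLp P G hG2 hG0 (fun i => auxIdx e J (Sum.inr i))).1
  have hint2 : Integrable (fun p : (Fin n → E) × (Fin k1 ⊕ Fin k2 → E) =>
      auxH F G (fun i => Sum.elim p.1 p.2 (auxIdx e J i)))
      ((Measure.pi fun _ => P).prod (Measure.pi fun _ => P)) :=
    hmp.integrable_comp_of_integrable hint
  have hQ : auxQ P (auxH F G) (auxIdx e J) =
      ∫ p : (Fin n → E) × (Fin k1 ⊕ Fin k2 → E), auxH F G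
        (fun i => Sum.elim p.1 p.2 (auxIdx e J i))
      ∂((Measure.pi fun _ => P).prod (Measure.pi fun _ => P)) := by
    rw [auxQ, ← hmp.map_eq, integral_map hmp.measurable.aemeasurable]
    · rfl
    · exact Measurable.aestronglyMeasurable (by fun_prop)
  have hprod : ∀ x : Fin n → E,
      (∫ y, F (fun i => Sum.elim x y (auxIdx (fun i => e (Sum.inl i)) (fun i => J (Sum.inl i)) i))
        ∂(Measure.pi fun _ : Fin k1 => P)) *
      (∫ y, G (fun i => Sum.elim x y (auxIdx (fun i => e (Sum.inr i)) (fun i => J (Sum.inr i)) i))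
        ∂(Measure.pi fun _ : Fin k2 => P)) =
      ∫ w, auxH F G (fun i => Sum.elim x w (auxIdx e J i)) ∂(Measure.pi fun _ => P) := by
    intro x
    rw [← integral_prod_mul]
    have hm2 := measurePreserving_sumPiEquivProdPi (X := fun _ : Fin k1 ⊕ Fin k2 => E)
      (fun _ => P)
    rw [← hm2.integral_comp']
    congr 1
    funext w
    simp only [auxH]
    congr 2
    · funext i
      cases h : e (Sum.inl i) <;> simp [auxIdx, h, MeasurableEquiv.sumPiEquivProdPi]
    · funext i
      cases h : e (Sum.inr i) <;> simp [auxIdx, h, MeasurableEquiv.sumPiEquivProdPi]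
  simp only [hprod]
  refine ⟨hint2.integral_prod_left, ?_⟩
  rw [hQ, integral_prod _ hint2]

theorem aux_sum_split {α β γ : Type*} [Fintype α] [Fintype β] [DecidableEq α] [DecidableEq β]
    [Fintype γ] (φ : (α → γ) → (β → γ) → ℝ) :
    ∑ e : α ⊕ β → γ, φ (fun i => e (Sum.inl i)) (fun i => e (Sum.inr i)) =
      ∑ p, ∑ q, φ p q := by
  rw [← Fintype.sum_prod_type']
  exact Fintype.sum_equiv (Equiv.sumArrowEquivProdArrow α β γ) _ _ (fun e => rfl)

theorem aux_expect {E : Type*} [MeasurableSpace E] (P : Measure E) [IsProbabilityMeasure P]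
    {k1 k2 n : ℕ} (a : ℝ)
    (hinj1 : MeasurableSet {u : Fin k1 → E | Function.Injective u})
    (hinj2 : MeasurableSet {u : Fin k2 → E | Function.Injective u})
    (f F : (Fin k1 → E) → ℝ) (g G : (Fin k2 → E) → ℝ)
    (hFm : Measurable F) (hGm : Measurable G)
    (hF2 : MemLp F 2 (Measure.pi fun _ : Fin k1 => P))
    (hG2 : MemLp G 2 (Measure.pi fun _ : Fin k2 => P))
    (hF0 : ∀ u, ¬ Function.Injective u → F u = 0)
    (hG0 : ∀ u, ¬ Function.Injective u → G u = 0)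
    (hfF : ∀ᵐ u ∂(Measure.pi fun _ : Fin k1 => P), Function.Injective u → f u = F u)
    (hgG : ∀ᵐ u ∂(Measure.pi fun _ : Fin k2 => P), Function.Injective u → g u = G u) :
    AEStronglyMeasurable (fun x => empInt P n a x k1 f * empInt P n a x k2 g)
      (Measure.pi fun _ : Fin n => P) ∧
    ∫ x, empInt P n a x k1 f * empInt P n a x k2 g ∂(Measure.pi fun _ : Fin n => P) =
      (√a)⁻¹ ^ (k1 + k2) * ∑ J : Fin k1 ⊕ Fin k2 → Fin n, ∑ e : Fin k1 ⊕ Fin k2 → Bool,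
        auxSgn e * auxQ P (auxH F G) (auxIdx e J) := by
  have hae : (fun x => empInt P n a x k1 f * empInt P n a x k2 g)
      =ᵐ[Measure.pi fun _ : Fin n => P] fun x => (√a)⁻¹ ^ (k1 + k2) *
      ∑ J : Fin k1 ⊕ Fin k2 → Fin n, ∑ e : Fin k1 ⊕ Fin k2 → Bool, auxSgn e *
      ((∫ y, F (fun i => Sum.elim x y (auxIdx (fun i => e (Sum.inl i)) (fun i => J (Sum.inl i)) i))
        ∂(Measure.pi fun _ : Fin k1 => P)) *
      (∫ y, G (fun i => Sum.elim x y (auxIdx (fun i => e (Sum.inr i)) (fun i => J (Sum.inr i)) i))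
        ∂(Measure.pi fun _ : Fin k2 => P))) := by
    filter_upwards [aux_rep (n := n) P a hinj1 f F hFm hF2 hF0 hfF,
      aux_rep (n := n) P a hinj2 g G hGm hG2 hG0 hgG] with x hx1 hx2
    rw [hx1, hx2]
    simp only [← auxSgn_eq, auxSgn_sum]
    rw [Finset.sum_comm]
    rw [aux_sum_split (fun p q => ∑ J : Fin k1 ⊕ Fin k2 → Fin n, auxSgn p * auxSgn q *
      ((∫ y, F (fun i => Sum.elim x y (auxIdx p (fun i => J (Sum.inl i)) i))
        ∂(Measure.pi fun _ : Fin k1 => P)) *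
      (∫ y, G (fun i => Sum.elim x y (auxIdx q (fun i => J (Sum.inr i)) i))
        ∂(Measure.pi fun _ : Fin k2 => P))))]
    rw [pow_add, mul_mul_mul_comm, Finset.sum_mul_sum]
    congr 1
    refine Finset.sum_congr rfl fun p _ => Finset.sum_congr rfl fun q _ => ?_
    rw [aux_sum_split (fun r s => auxSgn p * auxSgn q *
      ((∫ y, F (fun i => Sum.elim x y (auxIdx p r i))
        ∂(Measure.pi fun _ : Fin k1 => P)) *
      (∫ y, G (fun i => Sum.elim x y (auxIdx q s i))
        ∂(Measure.pi fun _ : Fin k2 => P))))]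
    rw [mul_mul_mul_comm, Finset.sum_mul_sum, Finset.mul_sum]
    simp only [Finset.mul_sum]
  have ht := fun e J => aux_term (n := n) P F G hFm hGm hF2 hG2 hF0 hG0 e J
  constructor
  · refine AEStronglyMeasurable.congr ?_ hae.symm
    refine AEStronglyMeasurable.const_mul ?_ _
    refine Finset.aestronglyMeasurable_fun_sum _ fun J _ => ?_
    refine Finset.aestronglyMeasurable_fun_sum _ fun e _ => ?_
    exact (ht e J).1.1.const_mul _
  · rw [integral_congr_ae hae, integral_const_mul]
    congr 1
    rw [integral_finsetSum _ fun J _ => integrable_finsetSum _ fun e _ => (ht e J).1.const_mul _]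
    refine Finset.sum_congr rfl fun J _ => ?_
    rw [integral_finsetSum _ fun e _ => (ht e J).1.const_mul _]
    refine Finset.sum_congr rfl fun e _ => ?_
    rw [integral_const_mul, (ht e J).2]

theorem aux_total {E : Type*} [MeasurableSpace E] (P : Measure E) [IsProbabilityMeasure P]
    {k1 k2 n : ℕ} (hk : k2 < k1) (hn : 1 ≤ n) (H : (Fin k1 ⊕ Fin k2 → E) → ℝ) (hH : Measurable H)
    (R : ℝ) (hR0 : 0 ≤ R) (hR : ∀ e (J : Fin k1 ⊕ Fin k2 → Fin n),
      ¬ Function.Injective (fun i => J (Sum.inl i)) → |auxQ P H (auxIdx e J)| ≤ R) :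
    |∑ J : Fin k1 ⊕ Fin k2 → Fin n, ∑ e : Fin k1 ⊕ Fin k2 → Bool,
        auxSgn e * auxQ P H (auxIdx e J)| ≤
      ((k1 + k2 : ℕ) : ℝ) ^ (k1 + k2) * √n ^ (k1 + k2) * (2 ^ (k1 + k2) * R) := by
  classical
  set S := Finset.univ.filter fun J : Fin k1 ⊕ Fin k2 → Fin n => ∀ i, ∃ i', i' ≠ i ∧ J i' = J i
    with hS
  have hJinj : ∀ J ∈ S, ¬ Function.Injective (fun i => J (Sum.inl i)) := by
    intro J hJ hcon
    simp only [hS, Finset.mem_filter, Finset.mem_univ, true_and] at hJ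
    have h1 : ∀ i : Fin k1, ∃ i' : Fin k2, J (Sum.inr i') = J (Sum.inl i) := by
      intro i
      obtain ⟨i', hi', hJi⟩ := hJ (Sum.inl i)
      cases i' with
      | inl i' => exact absurd (congrArg Sum.inl (hcon hJi)) hi'
      | inr i' => exact ⟨i', hJi⟩
    choose q hq using h1
    have hqi : Function.Injective q := by
      intro i i' h
      apply hcon
      simp only [← hq, h]
    have := Fintype.card_le_of_injective q hqi
    simp at this
    omega
  have hzero : ∀ J, J ∉ S → ∑ e : Fin k1 ⊕ Fin k2 → Bool, auxSgn e * auxQ P H (auxIdx e J) = 0 := by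
    intro J hJ
    simp only [hS, Finset.mem_filter, Finset.mem_univ, true_and] at hJ
    push Not at hJ
    obtain ⟨i, hi⟩ := hJ
    exact aux_vanish P H hH J i hi
  have hbd : ∀ J ∈ S, |∑ e : Fin k1 ⊕ Fin k2 → Bool, auxSgn e * auxQ P H (auxIdx e J)| ≤
      2 ^ (k1 + k2) * R := by
    intro J hJ
    refine (Finset.abs_sum_le_sum_abs _ _).trans ?_
    refine (Finset.sum_le_card_nsmul _ _ R fun e _ => ?_).trans ?_
    · rw [abs_mul, auxSgn_abs, one_mul]
      exact hR e J (hJinj J hJ)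
    · simp
  have hc := aux_card (k1 + k2) n (Fin k1 ⊕ Fin k2) (by simp) hn
  rw [← hS] at hc
  rw [← Finset.sum_subset (Finset.subset_univ S) (fun J _ hJ => hzero J hJ)]
  refine (Finset.abs_sum_le_sum_abs _ _).trans ?_
  refine (Finset.sum_le_card_nsmul _ _ _ hbd).trans ?_
  rw [nsmul_eq_mul]
  exact mul_le_mul_of_nonneg_right hc (by positivity)

theorem aux_inj_meas {E : Type*} [MeasurableSpace E]
    (hdiag : MeasurableSet {p : E × E | p.1 = p.2}) (k : ℕ) :
    MeasurableSet {u : Fin k → E | Function.Injective u} := by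
  have : {u : Fin k → E | Function.Injective u} =
      ⋂ i, ⋂ i', {u : Fin k → E | u i = u i' → i = i'} := by
    ext u; simp [Function.Injective]
  rw [this]
  refine MeasurableSet.iInter fun i => MeasurableSet.iInter fun i' => ?_
  by_cases h : i = i'
  · simp [h]
  · have h2 : {u : Fin k → E | u i = u i' → i = i'} =
      ((fun u : Fin k → E => (u i, u i')) ⁻¹' {p : E × E | p.1 = p.2})ᶜ := by
      ext u; simp [h]
    rw [h2]
    exact (hdiag.preimage (by fun_prop)).compl

theorem aux_P_le {E : Type*} [MeasurableSpace E] (μ : Measure E) (a : ℕ → ℝ) (P : ℕ → Measure E)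
    (h21 : Assumption21 μ a P) (n : ℕ) (hn : 1 ≤ n) (s : Set E) (hs : MeasurableSet s) :
    P n s ≤ (Real.toNNReal (a n / n) : ℝ≥0∞) * μ s := by
  obtain ⟨-, ha, -, -, hmono, hlim⟩ := h21
  have han := ha n hn
  have hn0 : (0 : ℝ) < n := by exact_mod_cast hn
  have h1 : ENNReal.ofReal ((n : ℝ) / a n) * P n s ≤ μ s := by
    refine ge_of_tendsto (hlim s hs) ?_
    filter_upwards [eventually_ge_atTop n] with m hm
    induction m, hm using Nat.le_induction with
    | base => exact le_rfl
    | succ m hm ih =>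
      refine ih.trans ?_
      have := hmono s hs m (hn.trans hm)
      push_cast
      exact this
  calc P n s = ENNReal.ofReal (a n / n) * (ENNReal.ofReal ((n : ℝ) / a n) * P n s) := by
        rw [← mul_assoc, ← ENNReal.ofReal_mul (by positivity)]
        have : a n / n * (n / a n) = 1 := by field_simp
        simp [this]
    _ ≤ _ := by
      rw [ENNReal.ofReal]
      gcongr

theorem aux_integral_le {E : Type*} [MeasurableSpace E] (P μ : Measure E) [IsProbabilityMeasure P]
    [SigmaFinite μ] (b : ℝ) (hb : 0 ≤ b)
    (hP : ∀ s, MeasurableSet s → P s ≤ (Real.toNNReal b : ℝ≥0∞) * μ s)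
    (k : ℕ) (F : (Fin k → E) → ℝ) (hF : MemLp F 2 (Measure.pi fun _ : Fin k => μ)) :
    MemLp F 2 (Measure.pi fun _ : Fin k => P) ∧
    √(∫ u, F u ^ 2 ∂(Measure.pi fun _ : Fin k => P)) ≤
      √b ^ k * √(∫ u, F u ^ 2 ∂(Measure.pi fun _ : Fin k => μ)) := by
  have hle := aux_pi_le P μ _ hP k
  have hF' : MemLp F 2 ((Real.toNNReal b ^ k) • (Measure.pi fun _ : Fin k => μ)) :=
    hF.smul_measure (c := ((Real.toNNReal b ^ k : ℝ≥0) : ℝ≥0∞)) ENNReal.coe_ne_top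
  refine ⟨hF'.mono_measure hle, ?_⟩
  have h1 := integral_mono_measure hle (ae_of_all _ fun u => sq_nonneg (F u)) hF'.integrable_sq
  rw [integral_smul_nnreal_measure] at h1
  have h2 : √b ^ k = √(b ^ k) := by
    rw [Real.sqrt_eq_rpow, Real.sqrt_eq_rpow, ← Real.rpow_natCast, ← Real.rpow_natCast,
      ← Real.rpow_mul hb, ← Real.rpow_mul hb, mul_comm]
  rw [h2, ← Real.sqrt_mul (by positivity)]
  refine Real.sqrt_le_sqrt (h1.trans_eq ?_)
  rw [NNReal.smul_def]
  simp [hb]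

theorem aux_main {E Ω : Type*} [MeasurableSpace E] [MeasurableSpace Ω]
    (μ : Measure E) [SigmaFinite μ]
    (a : ℕ → ℝ) (P : ℕ → Measure E) [∀ n, IsProbabilityMeasure (P n)]
    (h21 : Assumption21 μ a P)
    (Pr : Measure Ω) [IsProbabilityMeasure Pr]
    (X : (n : ℕ) → Fin n → Ω → E)
    (hXmeas : ∀ n j, Measurable (X n j))
    (hXlaw : ∀ n : ℕ, 1 ≤ n → ∀ j, Measure.map (X n j) Pr = P n)
    (hXindep : ∀ n : ℕ, iIndepFun (m := fun _ : Fin n => ‹MeasurableSpace E›) (X n) Pr)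
    (hdiag : MeasurableSet {p : E × E | p.1 = p.2})
    (k1 k2 : ℕ) (hk : k2 < k1)
    (f : (Fin k1 → E) → ℝ) (g : (Fin k2 → E) → ℝ)
    (hf : MemLp f 2 (Measure.pi fun _ : Fin k1 => μ))
    (hg : MemLp g 2 (Measure.pi fun _ : Fin k2 => μ)) :
    Tendsto (fun n : ℕ =>
        ∫ ω, empInt (P n) n (a n) (fun j => X n j ω) k1 f *
          empInt (P n) n (a n) (fun j => X n j ω) k2 g ∂Pr)
      atTop (𝓝 0) := by
  have hi1 := aux_inj_meas hdiag k1
  have hi2 := aux_inj_meas hdiag k2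
  set F : (Fin k1 → E) → ℝ := {u | Function.Injective u}.indicator (hf.1.mk f) with hF
  set G : (Fin k2 → E) → ℝ := {u | Function.Injective u}.indicator (hg.1.mk g) with hG
  have hFm : Measurable F := hf.1.stronglyMeasurable_mk.measurable.indicator hi1
  have hGm : Measurable G := hg.1.stronglyMeasurable_mk.measurable.indicator hi2
  have hF2 : MemLp F 2 (Measure.pi fun _ : Fin k1 => μ) :=
    (hf.ae_eq hf.1.ae_eq_mk).indicator hi1
  have hG2 : MemLp G 2 (Measure.pi fun _ : Fin k2 => μ) :=
    (hg.ae_eq hg.1.ae_eq_mk).indicator hi2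
  have hF0 : ∀ u, ¬ Function.Injective u → F u = 0 := fun u hu => Set.indicator_of_notMem hu _
  have hG0 : ∀ u, ¬ Function.Injective u → G u = 0 := fun u hu => Set.indicator_of_notMem hu _
  have hfF : ∀ᵐ u ∂(Measure.pi fun _ : Fin k1 => μ), Function.Injective u → f u = F u := by
    filter_upwards [hf.1.ae_eq_mk] with u hu hui
    rw [hF, Set.indicator_of_mem (by exact hui), hu]
  have hgG : ∀ᵐ u ∂(Measure.pi fun _ : Fin k2 => μ), Function.Injective u → g u = G u := by
    filter_upwards [hg.1.ae_eq_mk] with u hu hui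
    rw [hG, Set.indicator_of_mem (by exact hui), hu]
  set φ := ∫ u, F u ^ 2 ∂(Measure.pi fun _ : Fin k1 => μ) with hφ
  set ψ := ∫ u, G u ^ 2 ∂(Measure.pi fun _ : Fin k2 => μ) with hψ
  set φr : ℕ → ℝ := fun N => ∫ u, ((Set.univ.pi fun _ => spanningSets μ N)ᶜ.indicator F u) ^ 2
    ∂(Measure.pi fun _ : Fin k1 => μ) with hφr
  set C : ℝ := ((k1 + k2 : ℕ) : ℝ) ^ (k1 + k2) * 2 ^ (k1 + k2) * √ψ with hC
  -- the main estimate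
  have hmain : ∀ n : ℕ, 1 ≤ n → ∀ N : ℕ,
      |∫ ω, empInt (P n) n (a n) (fun j => X n j ω) k1 f *
          empInt (P n) n (a n) (fun j => X n j ω) k2 g ∂Pr| ≤
      C * √(φr N) + C * √φ * √(a n / n * μ.real (spanningSets μ N)) := by
    intro n hn N
    have han := h21.2.1 n hn
    have hn0 : (0 : ℝ) < n := by exact_mod_cast hn
    set b := a n / n with hb
    have hb0 : 0 < b := by positivity
    have hPle := aux_P_le μ a P h21 n hn
    set A := spanningSets μ N with hA
    have hAm : MeasurableSet A := measurableSet_spanningSets μ N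
    obtain ⟨hF2P, hFb⟩ := aux_integral_le (P n) μ b hb0.le hPle k1 F hF2
    obtain ⟨hG2P, hGb⟩ := aux_integral_le (P n) μ b hb0.le hPle k2 G hG2
    obtain ⟨-, hFrb⟩ := aux_integral_le (P n) μ b hb0.le hPle k1
      ((Set.univ.pi fun _ => A)ᶜ.indicator F)
      (hF2.indicator (MeasurableSet.univ_pi fun _ => hAm).compl)
    have hac : ∀ k, (Measure.pi fun _ : Fin k => P n) ≪ (Measure.pi fun _ : Fin k => μ) :=
      fun k => (Measure.absolutelyContinuous_of_le (aux_pi_le (P n) μ _ hPle k)).trans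
        Measure.smul_absolutelyContinuous
    obtain ⟨hmeas, hexp⟩ := aux_expect (n := n) (P n) (a n) hi1 hi2 f F g G hFm hGm hF2P hG2P
      hF0 hG0 ((hac k1).ae_le hfF) ((hac k2).ae_le hgG)
    have hlaw : Pr.map (fun ω j => X n j ω) = Measure.pi fun _ : Fin n => P n := by
      rw [(iIndepFun_iff_map_fun_eq_pi_map (fun j => (hXmeas n j).aemeasurable)).1 (hXindep n)]
      congr 1
      funext j
      exact hXlaw n hn j
    have hXm : Measurable (fun ω j => X n j ω) := measurable_pi_lambda _ (hXmeas n)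
    have hE : ∫ ω, empInt (P n) n (a n) (fun j => X n j ω) k1 f *
          empInt (P n) n (a n) (fun j => X n j ω) k2 g ∂Pr =
        ∫ x, empInt (P n) n (a n) x k1 f * empInt (P n) n (a n) x k2 g
          ∂(Measure.pi fun _ : Fin n => P n) := by
      rw [← hlaw, integral_map hXm.aemeasurable (by rw [hlaw]; exact hmeas)]
    rw [hE, hexp]
    have hPA : (P n).real A ≤ b * μ.real A := by
      have h1 := hPle A hAm
      have hfin : μ A ≠ ∞ := (measure_spanningSets_lt_top μ N).ne
      have h2 := ENNReal.toReal_mono (ENNReal.mul_ne_top ENNReal.coe_ne_top hfin) h1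
      rw [ENNReal.toReal_mul, ENNReal.coe_toReal, Real.coe_toNNReal _ hb0.le] at h2
      exact h2
    set D := √(φr N) + √φ * √(b * μ.real A) with hD
    have hD0 : 0 ≤ D := by positivity
    have hR : ∀ e (J : Fin k1 ⊕ Fin k2 → Fin n), ¬ Function.Injective (fun i => J (Sum.inl i)) →
        |auxQ (P n) (auxH F G) (auxIdx e J)| ≤ √b ^ (k1 + k2) * √ψ * D := by
      intro e J hJ
      refine (aux_bound (P n) F G hGm hF2P hG2P hF0 hG0 A hAm e J hJ).trans ?_
      rw [Real.sqrt_mul (by positivity)]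
      calc _ ≤ (√b ^ k1 * √(φr N)) * (√b ^ k2 * √ψ) +
            (√b ^ k1 * √φ) * (√(b * μ.real A) * (√b ^ k2 * √ψ)) := by
            gcongr
        _ = _ := by rw [hD]; ring
    have htot := aux_total (P n) hk hn (auxH F G) (by unfold auxH; fun_prop) _ (by positivity) hR
    rw [abs_mul, abs_of_nonneg (by positivity)]
    refine (mul_le_mul_of_nonneg_left htot (by positivity)).trans_eq ?_
    have hone : (√(a n))⁻¹ ^ (k1 + k2) * (√n ^ (k1 + k2) * √b ^ (k1 + k2)) = 1 := by
      rw [← mul_pow, ← mul_pow, ← Real.sqrt_mul (by positivity), hb,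
        mul_div_cancel₀ _ hn0.ne', inv_mul_cancel₀ (Real.sqrt_pos.2 han).ne', one_pow]
    calc _ = ((√(a n))⁻¹ ^ (k1 + k2) * (√n ^ (k1 + k2) * √b ^ (k1 + k2))) * (C * D) := by
          rw [hC]; ring
      _ = _ := by rw [hone, hD]; ring
  have hφr0 : Tendsto φr atTop (𝓝 0) := by
    have h0 : (0 : ℝ) = ∫ _u : Fin k1 → E, (0 : ℝ) ∂(Measure.pi fun _ : Fin k1 => μ) := by simp
    rw [h0]
    refine tendsto_integral_of_dominated_convergence (fun u => F u ^ 2) ?_ hF2.integrable_sq ?_ ?_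
    · intro N
      exact ((hFm.indicator (MeasurableSet.univ_pi fun _ =>
        measurableSet_spanningSets μ N).compl).pow_const 2).aestronglyMeasurable
    · intro N
      refine ae_of_all _ fun u => ?_
      by_cases h : u ∈ (Set.univ.pi fun _ : Fin k1 => spanningSets μ N)ᶜ
      · rw [Set.indicator_of_mem h]; simp
      · rw [Set.indicator_of_notMem h]; simp; positivity
    · refine ae_of_all _ fun u => ?_
      refine tendsto_const_nhds.congr' ?_
      have : ∀ᶠ N in atTop, ∀ i, u i ∈ spanningSets μ N := by
        refine eventually_all.2 fun i => ?_
        filter_upwards [eventually_ge_atTop (spanningSetsIndex μ (u i))] with N hN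
        exact mem_spanningSets_of_index_le μ (u i) hN
      filter_upwards [this] with N hN
      rw [Set.indicator_of_notMem (by simpa using hN)]
      simp
  have hlim1 : Tendsto (fun N => C * √(φr N)) atTop (𝓝 0) := by
    have := (Real.continuous_sqrt.tendsto 0).comp hφr0
    simpa using this.const_mul C
  rw [Metric.tendsto_atTop']
  intro η hη
  obtain ⟨N, hN⟩ := (hlim1.eventually (gt_mem_nhds (half_pos hη))).exists
  have hlim2 : Tendsto (fun n : ℕ => C * √φ * √(a n / n * μ.real (spanningSets μ N)))
      atTop (𝓝 0) := by
    have h1 := h21.2.2.2.1.mul_const (μ.real (spanningSets μ N))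
    have := (Real.continuous_sqrt.tendsto _).comp h1
    simpa using this.const_mul (C * √φ)
  obtain ⟨n0, hn0⟩ := eventually_atTop.1 (hlim2.eventually (gt_mem_nhds (half_pos hη)))
  refine ⟨max n0 1, fun n hn => ?_⟩
  rw [Real.dist_eq, sub_zero]
  have h1 := hmain n ((le_max_right _ _).trans hn.le) N
  have h2 := hn0 n ((le_max_left _ _).trans hn.le)
  linarith

end helpers

/-- Under Assumption 2.1, for the multiple empirical integrals of the
triangular array, for all `k1 ≠ k2` and `f ∈ L²(μ^{k1})`, `g ∈ L²(μ^{k2})`,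
`𝔼[I_{k1}^{(n)}(f) I_{k2}^{(n)}(g)] → 0`. -/
theorem expectation_empInt_mul_tendsto_zero_of_ne
    {E Ω : Type*} [MeasurableSpace E] [MeasurableSpace Ω]
    (μ : Measure E) [SigmaFinite μ] [NullSingletonClass μ]
    (a : ℕ → ℝ) (P : ℕ → Measure E) [∀ n, IsProbabilityMeasure (P n)]
    (h21 : Assumption21 μ a P)
    (Pr : Measure Ω) [IsProbabilityMeasure Pr]
    (X : (n : ℕ) → Fin n → Ω → E)
    (hXmeas : ∀ n j, Measurable (X n j))
    (hXlaw : ∀ n : ℕ, 1 ≤ n → ∀ j, Measure.map (X n j) Pr = P n)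
    (hXindep : ∀ n : ℕ, iIndepFun (m := fun _ : Fin n => ‹MeasurableSpace E›) (X n) Pr)
    (hdiag : MeasurableSet {p : E × E | p.1 = p.2})
    (k1 k2 : ℕ) (hne : k1 ≠ k2)
    (f : (Fin k1 → E) → ℝ) (g : (Fin k2 → E) → ℝ)
    (hf : MemLp f 2 (Measure.pi fun _ : Fin k1 => μ))
    (hg : MemLp g 2 (Measure.pi fun _ : Fin k2 => μ)) :
    Tendsto (fun n : ℕ =>
        ∫ ω, empInt (P n) n (a n) (fun j => X n j ω) k1 f *
          empInt (P n) n (a n) (fun j => X n j ω) k2 g ∂Pr)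
      atTop (𝓝 0) := by
  rcases lt_or_gt_of_ne hne with h | h
  · have := aux_main μ a P h21 Pr X hXmeas hXlaw hXindep hdiag k2 k1 h g f hg hf
    refine this.congr fun n => ?_
    congr 1
    funext ω
    exact mul_comm _ _
  · exact aux_main μ a P h21 Pr X hXmeas hXlaw hXindep hdiag k1 k2 h f g hf hg
end

section
/- There exists a constant C > 0, independent of k and n, such that for every k ≥ 1 and every integer n ≥ k/2, the coefficient B_{n,k} satisfies |B_{n,k}| ≤ C^k / k^{k/2}. -/
open scoped Classical in
/-- `numPartitions k r` is the number of partitions of `{1, …, k}` into disjoint sets whose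
multiset of cardinalities is `{r 1, …, r s}`. -/
noncomputable def numPartitions (k : ℕ) {s : ℕ} (r : Fin s → ℕ) : ℕ :=
  (Finset.univ.filter fun C : Finset (Finset (Fin k)) =>
      (↑C : Set (Finset (Fin k))).PairwiseDisjoint id ∧
      (∀ x : Fin k, ∃ A ∈ C, x ∈ A) ∧
      C.val.map Finset.card = Multiset.map r Finset.univ.val).card

/-- The combinatorial coefficient `B_{n,k}`. -/
noncomputable def Bnk (n k : ℕ) : ℝ :=
  ((k.factorial : ℝ) * Real.sqrt n ^ k)⁻¹ *
    ∑ s ∈ Finset.Icc 1 k,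
      (-1 : ℝ) ^ (k - s) * (n.choose s : ℝ) * (s.factorial : ℝ) *
        ∑ r ∈ (Finset.Nat.antidiagonalTuple s k).filter (fun r => ∀ i, 1 ≤ r i),
          (∏ i, ((r i : ℝ) - 1)) * (numPartitions k r : ℝ)

theorem numPartitions_mul_factorial_le (k : ℕ) {s : ℕ} (r : Fin s → ℕ) :
    numPartitions k r * s.factorial ≤ s ^ k := by
  classical
  unfold numPartitions
  set F := (Finset.univ.filter fun C : Finset (Finset (Fin k)) =>
      (↑C : Set (Finset (Fin k))).PairwiseDisjoint id ∧
      (∀ x : Fin k, ∃ A ∈ C, x ∈ A) ∧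
      C.val.map Finset.card = Multiset.map r Finset.univ.val) with hF
  have hdisj : ∀ C : F, ((C : Finset (Finset (Fin k))) : Set (Finset (Fin k))).PairwiseDisjoint id :=
    fun C => (Finset.mem_filter.1 C.2).2.1
  have hcov : ∀ C : F, ∀ x : Fin k, ∃ A : (C : Finset (Finset (Fin k))), x ∈ (A : Finset (Fin k)) := by
    intro C x
    obtain ⟨A, hA, hx⟩ := (Finset.mem_filter.1 C.2).2.2.1 x
    exact ⟨⟨A, hA⟩, hx⟩
  have hmul : ∀ C : F, (C : Finset (Finset (Fin k))).val.map Finset.card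
      = Multiset.map r Finset.univ.val := fun C => (Finset.mem_filter.1 C.2).2.2.2
  have hcard : ∀ C : F, Fintype.card (C : Finset (Finset (Fin k))) = s := by
    intro C
    have := congrArg Multiset.card (hmul C)
    simpa using this
  choose blk hblk using hcov
  let Φ : (Σ C : F, (Fin s ≃ (C : Finset (Finset (Fin k))))) → (Fin k → Fin s) :=
    fun p x => p.2.symm (blk p.1 x)
  have key : ∀ (p : Σ C : F, (Fin s ≃ (C : Finset (Finset (Fin k))))) (i : Fin s) (x : Fin k),
      x ∈ ((p.2 i : Finset (Fin k))) ↔ Φ p x = i := by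
    rintro ⟨C, e⟩ i x
    simp only [Φ, Equiv.symm_apply_eq]
    constructor
    · intro hx
      by_contra hne
      have hne' : ((blk C x : Finset (Fin k))) ≠ (e i : Finset (Fin k)) :=
        fun h => hne (Subtype.ext h)
      have := hdisj C (blk C x).2 (e i).2 hne'
      exact (Finset.disjoint_left.1 this) (hblk C x) hx
    · intro h
      rw [← h]; exact hblk C x
  have hinj : Function.Injective Φ := by
    intro p q hpq
    have h1 : ∀ i, ((p.2 i : Finset (Fin k))) = (q.2 i : Finset (Fin k)) := by
      intro i
      ext x
      rw [key, key, hpq]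
    have h2 : p.1 = q.1 := by
      apply Subtype.ext
      ext A
      constructor
      · intro hA
        have := h1 (p.2.symm ⟨A, hA⟩)
        simp only [Equiv.apply_symm_apply] at this
        rw [this]; exact (q.2 _).2
      · intro hA
        have := h1 (q.2.symm ⟨A, hA⟩)
        simp only [Equiv.apply_symm_apply] at this
        rw [← this]; exact (p.2 _).2
    obtain ⟨C, e⟩ := p
    obtain ⟨D, e'⟩ := q
    dsimp at h2
    subst h2
    congr 1
    ext1 i
    exact Subtype.ext (h1 i)
  have := Fintype.card_le_of_injective Φ hinj
  rw [Fintype.card_sigma] at this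
  have h3 : ∀ C : F, Fintype.card (Fin s ≃ (C : Finset (Finset (Fin k)))) = s.factorial := by
    intro C
    have e : Fin s ≃ (C : Finset (Finset (Fin k))) := Fintype.equivOfCardEq (by simp [hcard C] )
    rw [Fintype.card_equiv e, Fintype.card_fin]
  simp only [h3] at this
  simpa using this

theorem geom_aux (k : ℕ) : ∑ j ∈ Finset.Icc 1 k, (1 / 2 : ℝ) ^ j ≤ 1 := by
  have : ∑ j ∈ Finset.Icc 1 k, (1 / 2 : ℝ) ^ j = 1 - (1 / 2 : ℝ) ^ k := by
    induction k with
    | zero => simp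
    | succ k ih => rw [Finset.sum_Icc_succ_top (by omega), ih]; ring
  rw [this]
  have : (0 : ℝ) ≤ (1 / 2 : ℝ) ^ k := by positivity
  linarith

theorem sum_prod_aux (s k : ℕ) :
    ∑ r ∈ (Finset.Nat.antidiagonalTuple s k).filter (fun r => ∀ i, 1 ≤ r i),
      (∏ i, ((r i : ℝ) - 1)) ≤ 4 ^ k := by
  have h1 : ∀ r ∈ (Finset.Nat.antidiagonalTuple s k).filter (fun r => ∀ i, 1 ≤ r i),
      (∏ i, ((r i : ℝ) - 1)) ≤ 4 ^ k * ∏ i, (1 / 2 : ℝ) ^ (r i) := by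
    intro r hr
    rw [Finset.mem_filter, Finset.Nat.mem_antidiagonalTuple] at hr
    obtain ⟨hs, hp⟩ := hr
    rw [← hs, ← Finset.prod_pow_eq_pow_sum, ← Finset.prod_mul_distrib]
    apply Finset.prod_le_prod
    · intro i _
      have : (1 : ℝ) ≤ r i := by exact_mod_cast hp i
      linarith
    · intro i _
      rw [← mul_pow]
      have : ((r i : ℕ) : ℝ) < 2 ^ (r i) := by exact_mod_cast Nat.lt_two_pow_self
      norm_num
      linarith
  refine (Finset.sum_le_sum h1).trans ?_
  rw [← Finset.mul_sum]
  have h2 : ∑ r ∈ (Finset.Nat.antidiagonalTuple s k).filter (fun r => ∀ i, 1 ≤ r i),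
      ∏ i, (1 / 2 : ℝ) ^ (r i) ≤
      ∑ r ∈ Fintype.piFinset (fun _ : Fin s => Finset.Icc 1 k), ∏ i, (1 / 2 : ℝ) ^ (r i) := by
    apply Finset.sum_le_sum_of_subset_of_nonneg
    · intro r hr
      rw [Finset.mem_filter, Finset.Nat.mem_antidiagonalTuple] at hr
      rw [Fintype.mem_piFinset]
      intro i
      rw [Finset.mem_Icc]
      refine ⟨hr.2 i, ?_⟩
      rw [← hr.1]
      exact Finset.single_le_sum (f := r) (fun _ _ => Nat.zero_le _) (Finset.mem_univ i)
    · intros; positivity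
  have h3 : ∑ r ∈ Fintype.piFinset (fun _ : Fin s => Finset.Icc 1 k),
      ∏ i, (1 / 2 : ℝ) ^ (r i) ≤ 1 := by
    rw [← Finset.prod_univ_sum (fun _ : Fin s => Finset.Icc 1 k) (fun _ j => (1 / 2 : ℝ) ^ j)]
    apply Finset.prod_le_one
    · intros; positivity
    · intros; exact geom_aux k
  have : (0 : ℝ) < 4 ^ k := by positivity
  nlinarith

theorem inner_bound (s k : ℕ) (hsk : s ≤ k) :
    |∑ r ∈ (Finset.Nat.antidiagonalTuple s k).filter (fun r => ∀ i, 1 ≤ r i),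
      (∏ i, ((r i : ℝ) - 1)) * (numPartitions k r : ℝ)| ≤
      4 ^ k * ((k : ℝ) ^ k / s.factorial) := by
  have hnn : ∀ r ∈ (Finset.Nat.antidiagonalTuple s k).filter (fun r => ∀ i, 1 ≤ r i),
      (0 : ℝ) ≤ ∏ i, ((r i : ℝ) - 1) := by
    intro r hr
    apply Finset.prod_nonneg
    intro i _
    have : (1 : ℝ) ≤ r i := by exact_mod_cast (Finset.mem_filter.1 hr).2 i
    linarith
  rw [abs_of_nonneg (Finset.sum_nonneg fun r hr => mul_nonneg (hnn r hr) (Nat.cast_nonneg _))]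
  calc _ ≤ ∑ r ∈ (Finset.Nat.antidiagonalTuple s k).filter (fun r => ∀ i, 1 ≤ r i),
      (∏ i, ((r i : ℝ) - 1)) * ((k : ℝ) ^ k / s.factorial) := by
        apply Finset.sum_le_sum
        intro r hr
        apply mul_le_mul_of_nonneg_left _ (hnn r hr)
        rw [le_div_iff₀ (by positivity)]
        have := (numPartitions_mul_factorial_le k r).trans
          (Nat.pow_le_pow_left hsk k)
        exact_mod_cast this
    _ ≤ _ := by
        rw [← Finset.sum_mul]
        exact mul_le_mul_of_nonneg_right (sum_prod_aux s k) (by positivity)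

theorem inner_zero (s k : ℕ) (h : k < 2 * s) :
    ∑ r ∈ (Finset.Nat.antidiagonalTuple s k).filter (fun r => ∀ i, 1 ≤ r i),
      (∏ i, ((r i : ℝ) - 1)) * (numPartitions k r : ℝ) = 0 := by
  apply Finset.sum_eq_zero
  intro r hr
  rw [Finset.mem_filter, Finset.Nat.mem_antidiagonalTuple] at hr
  have : ∃ i, r i = 1 := by
    by_contra! hne
    have h2 : ∀ i ∈ Finset.univ, 2 ≤ r i := fun i _ => by
      have := hr.2 i
      have := hne i
      omega
    have := Finset.card_nsmul_le_sum Finset.univ r 2 h2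
    rw [hr.1] at this
    simp at this
    omega
  obtain ⟨i, hi⟩ := this
  rw [Finset.prod_eq_zero (Finset.mem_univ i) (by simp [hi]), zero_mul]

theorem pow_aux (n k s : ℕ) (hkn : k ≤ 2 * n) (h : 2 * s ≤ k) :
    (n : ℝ) ^ s * Real.sqrt k ^ k ≤ 2 ^ k * k ^ s * Real.sqrt n ^ k := by
  obtain ⟨d, hd⟩ := Nat.exists_eq_add_of_le h
  have e : ∀ m : ℕ, Real.sqrt m ^ k = (m : ℝ) ^ s * Real.sqrt m ^ d := by
    intro m
    conv_lhs => rw [hd]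
    rw [pow_add, pow_mul, Real.sq_sqrt (Nat.cast_nonneg _)]
  rw [e k, e n]
  have h1 : Real.sqrt k ≤ 2 * Real.sqrt n := by
    rw [Real.sqrt_le_left (by positivity), mul_pow, Real.sq_sqrt (Nat.cast_nonneg _)]
    have : (k : ℝ) ≤ 2 * n := by exact_mod_cast hkn
    have : (0 : ℝ) ≤ n := Nat.cast_nonneg _
    linarith
  have h2 : Real.sqrt k ^ d ≤ 2 ^ k * Real.sqrt n ^ d := by
    calc Real.sqrt k ^ d ≤ (2 * Real.sqrt n) ^ d := by gcongr
      _ = 2 ^ d * Real.sqrt n ^ d := mul_pow _ _ _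
      _ ≤ _ := by
        gcongr
        · norm_num
        · omega
  calc _ = ((n : ℝ) ^ s * k ^ s) * Real.sqrt k ^ d := by ring
    _ ≤ ((n : ℝ) ^ s * k ^ s) * (2 ^ k * Real.sqrt n ^ d) := by gcongr
    _ = _ := by ring

theorem term_bound (n k s : ℕ) (hk : 1 ≤ k) (hkn : k ≤ 2 * n) (hsk : s ≤ k) :
    |((k.factorial : ℝ) * Real.sqrt n ^ k)⁻¹ *
      ((-1 : ℝ) ^ (k - s) * (n.choose s : ℝ) * (s.factorial : ℝ) *
        ∑ r ∈ (Finset.Nat.antidiagonalTuple s k).filter (fun r => ∀ i, 1 ≤ r i),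
          (∏ i, ((r i : ℝ) - 1)) * (numPartitions k r : ℝ))| ≤
      (8 * Real.exp 1 ^ 2) ^ k / Real.sqrt k ^ k := by
  by_cases h : 2 * s ≤ k
  swap
  · rw [inner_zero s k (by omega)]
    simp only [mul_zero, abs_zero]
    positivity
  have hn0 : (0 : ℝ) < n := by exact_mod_cast (by omega : 0 < n)
  have hk0 : (0 : ℝ) < k := by exact_mod_cast (by omega : 0 < k)
  have hsn : 0 < Real.sqrt n := Real.sqrt_pos.2 hn0
  have hsk' : 0 < Real.sqrt k := Real.sqrt_pos.2 hk0
  have hd : (n.choose s : ℝ) * (s.factorial : ℝ) ≤ (n : ℝ) ^ s := by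
    have := Nat.descFactorial_le_pow n s
    rw [Nat.descFactorial_eq_factorial_mul_choose, mul_comm] at this
    exact_mod_cast this
  have he1 : (k : ℝ) ^ k / k.factorial ≤ Real.exp 1 ^ k := by
    rw [← Real.exp_nat_mul, mul_one]
    exact Real.pow_div_factorial_le_exp _ hk0.le k
  have he2 : (k : ℝ) ^ s / s.factorial ≤ Real.exp 1 ^ k := by
    rw [← Real.exp_nat_mul, mul_one]
    exact Real.pow_div_factorial_le_exp _ hk0.le s
  have hp := pow_aux n k s hkn h
  have hp' : (n : ℝ) ^ s / Real.sqrt n ^ k ≤ 2 ^ k * k ^ s / Real.sqrt k ^ k := by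
    rw [div_le_div_iff₀ (by positivity) (by positivity)]
    exact hp
  have hb := inner_bound s k hsk
  rw [abs_mul, abs_mul, mul_assoc ((-1 : ℝ) ^ (k - s)), abs_mul ((-1 : ℝ) ^ (k - s)), abs_pow,
    abs_neg, abs_one, one_pow, one_mul,
    abs_of_nonneg (by positivity : (0 : ℝ) ≤ ((k.factorial : ℝ) * Real.sqrt n ^ k)⁻¹),
    abs_of_nonneg (by positivity : (0 : ℝ) ≤ (n.choose s : ℝ) * (s.factorial : ℝ))]
  calc _ ≤ ((k.factorial : ℝ) * Real.sqrt n ^ k)⁻¹ *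
        ((n : ℝ) ^ s * (4 ^ k * ((k : ℝ) ^ k / s.factorial))) := by gcongr
    _ = 4 ^ k * ((k : ℝ) ^ k / k.factorial) * ((n : ℝ) ^ s / Real.sqrt n ^ k) / s.factorial := by
        field_simp
    _ ≤ 4 ^ k * (Real.exp 1 ^ k) * (2 ^ k * k ^ s / Real.sqrt k ^ k) / s.factorial := by gcongr
    _ = 4 ^ k * (Real.exp 1 ^ k) * 2 ^ k / Real.sqrt k ^ k * (k ^ s / s.factorial) := by
        field_simp
    _ ≤ 4 ^ k * (Real.exp 1 ^ k) * 2 ^ k / Real.sqrt k ^ k * Real.exp 1 ^ k := by gcongr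
    _ = _ := by
        rw [mul_pow, show (8 : ℝ) = 4 * 2 by norm_num, mul_pow]
        ring

/-- There is a constant `C > 0`, independent of `k` and `n`, such that for
all `k ≥ 1` and all integers `n ≥ k/2`, `|B_{n,k}| ≤ C^k / k^{k/2}`. -/
theorem abs_Bnk_le :
    ∃ C : ℝ, 0 < C ∧ ∀ k n : ℕ, 1 ≤ k → k ≤ 2 * n →
      |Bnk n k| ≤ C ^ k / Real.sqrt k ^ k := by
  refine ⟨2 * (8 * Real.exp 1 ^ 2), by positivity, ?_⟩
  intro k n hk hkn
  unfold Bnk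
  rw [Finset.mul_sum]
  refine (Finset.abs_sum_le_sum_abs _ _).trans ?_
  refine (Finset.sum_le_sum fun s hs =>
    term_bound n k s hk hkn (Finset.mem_Icc.1 hs).2).trans ?_
  rw [Finset.sum_const, nsmul_eq_mul, mul_pow 2 (8 * Real.exp 1 ^ 2) k, mul_div_assoc]
  apply mul_le_mul_of_nonneg_right _ (by positivity)
  have : k < 2 ^ k := Nat.lt_two_pow_self
  simp only [Nat.card_Icc, Nat.add_sub_cancel]
  exact_mod_cast this.le
end

section
/- Under Assumption 2.1 and with the multiple empirical integrals I_k^{(n)} defined from the triangular array, for all k_1, k_2 ≥ 1, f ∈ L²(μ^{k_1}) and g ∈ L²(μ^{k_2}), the following identity holds almost surely: I_{k_1}^{(n)}(f) · I_{k_2}^{(n)}(g) = Σ_{l=0}^{min(k_1,k_2)} Σ_{p=0}^{l} (n/a_n)^{(l+p)/2} · |𝓑(l,p)| · n^{−(l−p)/2} · I_{k_1+k_2−l−p}^{(n)}( (f⊗g)̄_{𝓑(l,p)} ), where (f⊗g)̄_{𝓑(l,p)} is the averaged colored-diagram function defined in the context. -/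
open MeasureTheory ProbabilityTheory Filter Topology
open scoped ENNReal NNReal

/-- The symmetrization `f̃` of a function of `k` variables. -/
noncomputable def symmetrize {E : Type*} (k : ℕ) (f : (Fin k → E) → ℝ) :
    (Fin k → E) → ℝ :=
  fun u => (k.factorial : ℝ)⁻¹ * ∑ σ : Equiv.Perm (Fin k), f (u ∘ σ)


/-- The function `(f ⊗ g)_{B(𝒩,𝒩₁)}` of `k1 + k2 - l - p` variables attached to a colored
diagram: the diagram is the pair of injections `(j1, j2)` and the colored edges form the
subset `S ⊆ Fin l` (with `S.card = p`).  The variables are enumerated so that the first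
`k1 - p` of them are the surviving first-row variables (in increasing order of index) and
the remaining `k2 - l` are the unmatched second-row variables (in increasing order); the
`p` variables corresponding to edges in `S` are integrated out with respect to `P`
(realized as an integral over `E^{k1}`, the unused coordinates being dummy variables for
the probability measure `P`). -/
noncomputable def coloredFun {E : Type*} [MeasurableSpace E] [Nonempty E] (P : Measure E)
    (k1 k2 l p : ℕ) (j1 : Fin l ↪ Fin k1) (j2 : Fin l ↪ Fin k2) (S : Finset (Fin l))
    (f : (Fin k1 → E) → ℝ) (g : (Fin k2 → E) → ℝ)
    (v : Fin (k1 + k2 - l - p) → E) : ℝ :=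
  let A : Finset (Fin k1) := Finset.univ.filter fun i => ∀ s ∈ S, j1 s ≠ i
  let B : Finset (Fin k2) := Finset.univ.filter fun i => ∀ s : Fin l, j2 s ≠ i
  ∫ w : Fin k1 → E,
    (fun x : Fin k1 → E =>
      f x * g (fun i =>
        if hm : ∃ s, j2 s = i then x (j1 (Classical.choose hm))
        else if hib : i ∈ B ∧ A.card + B.card ≤ k1 + k2 - l - p then
          v ⟨A.card + ((B.orderIsoOfFin rfl).symm ⟨i, hib.1⟩ : Fin B.card),
             lt_of_lt_of_le (Nat.add_lt_add_left (Fin.is_lt _) _) hib.2⟩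
        else Classical.arbitrary E))
      (fun i : Fin k1 =>
        if hia : i ∈ A ∧ A.card ≤ k1 + k2 - l - p then
          v (Fin.castLE hia.2 ((A.orderIsoOfFin rfl).symm ⟨i, hia.1⟩))
        else w i)
    ∂(Measure.pi fun _ : Fin k1 => P)

/-- The function `(f ⊗ g)̄_{𝓑(l,p)}`: the average of `coloredFun` over all colored diagrams
with `l` edges, `p` of which are colored (each colored diagram being counted `l!` times). -/
noncomputable def avgColored {E : Type*} [MeasurableSpace E] [Nonempty E] (P : Measure E)
    (k1 k2 l p : ℕ) (f : (Fin k1 → E) → ℝ) (g : (Fin k2 → E) → ℝ) :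
    (Fin (k1 + k2 - l - p) → E) → ℝ :=
  fun v =>
    (((Fintype.card (Fin l ↪ Fin k1) * Fintype.card (Fin l ↪ Fin k2) *
        (Finset.powersetCard p (Finset.univ : Finset (Fin l))).card : ℕ) : ℝ))⁻¹ *
      ∑ j1 : Fin l ↪ Fin k1, ∑ j2 : Fin l ↪ Fin k2,
        ∑ S ∈ Finset.powersetCard p (Finset.univ : Finset (Fin l)),
          coloredFun P k1 k2 l p j1 j2 S f g v


namespace DiagramProof

/-- Substitute sample points for the labelled variables. -/
def val {E α : Type*} {n : ℕ} (X : Fin n → E) (w : α → E) (σ : α → Option (Fin n)) : α → E :=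
  fun i => (σ i).elim (w i) X

/-- A labelling that is injective where it is defined. -/
def PInj {α : Type*} {n : ℕ} (σ : α → Option (Fin n)) : Prop :=
  ∀ i i', σ i = σ i' → σ i ≠ none → i = i'

noncomputable def cw {α : Type*} [Fintype α] {n : ℕ} (σ : α → Option (Fin n)) : ℝ :=
  ∏ i, (σ i).elim (-(n : ℝ)) (fun _ => 1)

/-- The integral attached to a labelling. -/
noncomputable def GI {E α : Type*} [Fintype α] [MeasurableSpace E] {n : ℕ} (P : Measure E)
    (X : Fin n → E) (f : (α → E) → ℝ) (σ : α → Option (Fin n)) : ℝ :=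
  ∫ w : α → E, f (val X w σ) ∂(Measure.pi fun _ => P)

/-- Integrability of every labelled section. -/
def Good {E α : Type*} [Fintype α] [MeasurableSpace E] {n : ℕ} (P : Measure E)
    (X : Fin n → E) (f : (α → E) → ℝ) : Prop :=
  ∀ σ : α → Option (Fin n), PInj σ →
    Integrable f (Measure.map (fun w => val X w σ) (Measure.pi fun _ : α => P))

section meas
variable {E : Type*} [MeasurableSpace E] (P : Measure E) [IsProbabilityMeasure P]

lemma measurable_val {α : Type*} {n : ℕ} (X : Fin n → E) (σ : α → Option (Fin n)) :
    Measurable (fun w : α → E => val X w σ) := by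
  refine measurable_pi_lambda _ fun i => ?_
  simp only [val]
  cases σ i with
  | none => exact measurable_pi_apply i
  | some j => exact measurable_const

lemma mp_comp {α β : Type*} [Fintype α] [Fintype β] (e : α → β) (he : Function.Injective e) :
    MeasurePreserving (fun z : β → E => z ∘ e) (Measure.pi fun _ => P) (Measure.pi fun _ => P) := by
  have hm : Measurable (fun z : β → E => z ∘ e) :=
    measurable_pi_lambda _ fun i => measurable_pi_apply (e i)
  refine ⟨hm, ?_⟩
  symm
  refine Measure.pi_eq fun s hs => ?_
  rw [Measure.map_apply hm (MeasurableSet.univ_pi hs)]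
  have : (fun z : β → E => z ∘ e) ⁻¹' (Set.univ.pi s)
      = Set.univ.pi (Function.extend e s (fun _ => Set.univ)) := by
    ext z
    simp only [Set.mem_preimage, Set.mem_univ_pi, Function.comp]
    constructor
    · intro h j
      by_cases hj : ∃ i, e i = j
      · obtain ⟨i, rfl⟩ := hj
        rw [he.extend_apply]; exact h i
      · rw [Function.extend_apply' _ _ _ hj]; trivial
    · intro h i
      have := h (e i)
      rwa [he.extend_apply] at this
  rw [this, Measure.pi_pi]
  symm
  refine Fintype.prod_of_injective e he _ _ ?_ ?_
  · intro j hj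
    rw [Function.extend_apply' _ _ _ (by simpa using hj)]; simp
  · intro i
    rw [he.extend_apply]

lemma mp_elim {α β : Type*} [Fintype α] [Fintype β] :
    MeasurePreserving (fun z : (α → E) × (β → E) => (Sum.elim z.1 z.2 : α ⊕ β → E))
      ((Measure.pi fun _ => P).prod (Measure.pi fun _ => P)) (Measure.pi fun _ => P) := by
  have := measurePreserving_sumPiEquivProdPi_symm (X := fun _ : α ⊕ β => E) (fun _ => P)
  convert this using 1
  ext z i
  cases i <;> rfl

/-- The injection selecting the variables of a labelling. -/
def sel {α : Type*} {n : ℕ} (σ : α → Option (Fin n)) : α → Fin n ⊕ α :=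
  fun i => (σ i).elim (Sum.inr i) Sum.inl

lemma sel_inj {α : Type*} {n : ℕ} {σ : α → Option (Fin n)} (h : PInj σ) :
    Function.Injective (sel σ) := by
  intro i i' hii
  simp only [sel] at hii
  cases h1 : σ i with
  | none =>
    cases h2 : σ i' with
    | none => simpa [h1, h2] using hii
    | some j' => simp [h1, h2] at hii
  | some j =>
    cases h2 : σ i' with
    | none => simp [h1, h2] at hii
    | some j' =>
      simp [h1, h2] at hii
      exact h i i' (by rw [h1, h2, hii]) (by simp [h1])

lemma val_eq_sel {α : Type*} {n : ℕ} (X : Fin n → E) (w : α → E) (σ : α → Option (Fin n)) :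
    val X w σ = Sum.elim X w ∘ sel σ := by
  ext i
  simp only [val, sel, Function.comp]
  cases σ i <;> rfl

lemma mp_val {α : Type*} [Fintype α] {n : ℕ} {σ : α → Option (Fin n)} (h : PInj σ) :
    MeasurePreserving (fun z : (Fin n → E) × (α → E) => val z.1 z.2 σ)
      ((Measure.pi fun _ => P).prod (Measure.pi fun _ => P)) (Measure.pi fun _ => P) := by
  have := (mp_comp P (sel σ) (sel_inj h)).comp (mp_elim P (α := Fin n) (β := α))
  convert this using 1
  ext z i
  simp only [val_eq_sel, Function.comp]

lemma ae_val {α : Type*} [Fintype α] {n : ℕ} {σ : α → Option (Fin n)} (h : PInj σ)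
    {q : (α → E) → Prop} (hq : ∀ᵐ u ∂(Measure.pi fun _ : α => P), q u) :
    ∀ᵐ X ∂(Measure.pi fun _ : Fin n => P), ∀ᵐ w ∂(Measure.pi fun _ : α => P), q (val X w σ) :=
  Measure.ae_ae_of_ae_prod ((mp_val P h).quasiMeasurePreserving.ae hq)

lemma ae_int_val {α : Type*} [Fintype α] {n : ℕ} {σ : α → Option (Fin n)} (h : PInj σ)
    {f : (α → E) → ℝ} (hf : Integrable f (Measure.pi fun _ : α => P)) :
    ∀ᵐ X ∂(Measure.pi fun _ : Fin n => P),
      Integrable f (Measure.map (fun w => val X w σ) (Measure.pi fun _ : α => P)) := by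
  obtain ⟨f', hf', hff'⟩ := hf.1
  have hi : Integrable f' (Measure.pi fun _ : α => P) := hf.congr hff'
  have h1 := (Integrable.prod_right_ae ((mp_val P h).integrable_comp_of_integrable hi))
  -- a measurable null set containing the bad set
  obtain ⟨Z, hZ, hZm, hZ0⟩ := exists_measurable_superset_of_null (ae_iff.1 hff')
  have h2 : ∀ᵐ u ∂(Measure.pi fun _ : α => P), u ∉ Z := by
    rw [ae_iff]; simpa using hZ0
  have h3 := ae_val P h h2
  filter_upwards [h1, h3] with X h1 h3
  have hmv := measurable_val X σ
  have : f' =ᵐ[Measure.map (fun w => val X w σ) (Measure.pi fun _ : α => P)] f := by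
    have : ∀ᵐ u ∂(Measure.map (fun w => val X w σ) (Measure.pi fun _ : α => P)), u ∉ Z := by
      rw [ae_map_iff hmv.aemeasurable hZm.compl]
      exact h3
    filter_upwards [this] with u hu
    by_contra hne
    exact hu (hZ (fun h => hne h.symm))
  refine Integrable.congr ?_ this
  rw [integrable_map_measure hf'.aestronglyMeasurable hmv.aemeasurable]
  exact h1

lemma ae_good {α : Type*} [Fintype α] {n : ℕ}
    {f : (α → E) → ℝ} (hf : Integrable f (Measure.pi fun _ : α => P)) :
    ∀ᵐ X ∂(Measure.pi fun _ : Fin n => P), Good P X f := by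
  classical
  unfold Good
  rw [ae_all_iff]; intro σ
  by_cases h : PInj σ
  · filter_upwards [ae_int_val P h hf] with X hX _ using hX
  · exact Eventually.of_forall fun X h' => absurd h' h

lemma measurableSet_inj (hdiag : MeasurableSet {p : E × E | p.1 = p.2}) (α : Type*) [Fintype α] :
    MeasurableSet {u : α → E | Function.Injective u} := by
  have : {u : α → E | Function.Injective u} =
      ⋂ i, ⋂ j, {u : α → E | u i = u j → i = j} := by
    ext u; simp [Function.Injective]
  rw [this]
  refine MeasurableSet.iInter fun i => MeasurableSet.iInter fun j => ?_
  by_cases hij : i = j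
  · simp [hij]
  · simp only [hij, imp_false]
    have : Measurable (fun u : α → E => (u i, u j)) :=
      (measurable_pi_apply i).prodMk (measurable_pi_apply j)
    exact (this hdiag).compl

lemma ae_inj (hdiag : MeasurableSet {p : E × E | p.1 = p.2}) (h0 : ∀ x, P {x} = 0)
    (α : Type*) [Fintype α] :
    ∀ᵐ u ∂(Measure.pi fun _ : α => P), Function.Injective u := by
  have key : ∀ i j : α, i ≠ j → ∀ᵐ u ∂(Measure.pi fun _ : α => P), u i ≠ u j := by
    intro i j hij
    have he : Function.Injective (Sum.elim (fun _ : Unit => i) (fun _ : Unit => j)) := by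
      rintro (⟨⟩ | ⟨⟩) (⟨⟩ | ⟨⟩) h <;> simp_all
    have hE := measurePreserving_sumPiEquivProdPi (X := fun _ : Unit ⊕ Unit => E) (fun _ => P)
    have h1 := hE.comp (mp_comp P _ he)
    have h2 : MeasurePreserving (fun z : (Unit → E) × (Unit → E) => (z.1 (), z.2 ()))
      ((Measure.pi fun _ => P).prod (Measure.pi fun _ => P)) (P.prod P) :=
      (measurePreserving_eval (fun _ : Unit => P) ()).prod (measurePreserving_eval (fun _ : Unit => P) ())
    have h3 := h2.comp h1
    have h4 : ∀ᵐ p ∂(P.prod P), p.1 ≠ p.2 := by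
      rw [ae_iff]
      simp only [ne_eq, not_not]
      rw [Measure.measure_prod_null hdiag]
      refine Eventually.of_forall fun x => ?_
      have : Prod.mk x ⁻¹' {p : E × E | p.1 = p.2} = {x} := by
        ext y; simp [eq_comm]
      show P (Prod.mk x ⁻¹' {p : E × E | p.1 = p.2}) = 0
      rw [this]; exact h0 x
    have := h3.quasiMeasurePreserving.ae h4
    exact this
  have : ∀ᵐ u ∂(Measure.pi fun _ : α => P), ∀ i j, i ≠ j → u i ≠ u j := by
    rw [ae_all_iff]; intro i
    rw [ae_all_iff]; intro j
    by_cases hij : i = j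
    · exact Eventually.of_forall fun u h => absurd hij h
    · filter_upwards [key i j hij] with u hu _ using hu
  filter_upwards [this] with u hu i j h
  by_contra hne
  exact hu i j hne h

/-- The expansion of the product of mixed measures. -/
lemma pi_mix {n k : ℕ} (X : Fin n → E) (ε : Fin k → Bool) :
    Measure.pi (fun i => mixMeasure P n X (ε i)) =
      ∑ σ ∈ (Finset.univ : Finset (Fin k → Option (Fin n))).filter
        (fun σ => (fun i => (σ i).isSome) = ε),
        (∏ i, (σ i).elim (n : ℝ≥0) (fun _ => 1)) •
          Measure.map (fun w => val X w σ) (Measure.pi fun _ : Fin k => P) := by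
  classical
  have hfin : ∀ b, IsFiniteMeasure (mixMeasure P n X b) := by
    intro b
    cases b <;> simp only [mixMeasure] <;> infer_instance
  have hsf : ∀ i, SigmaFinite (mixMeasure P n X (ε i)) := fun i => by
    haveI := hfin (ε i); infer_instance
  refine Measure.pi_eq fun s hs => ?_
  rw [Measure.finsetSum_apply]
  let m : Option (Fin n) → Set E → ℝ≥0∞ := fun o s => o.elim ((n : ℝ≥0∞) * P s) (fun j => Measure.dirac (X j) s)
  have h1 : ∀ i, mixMeasure P n X (ε i) (s i) =
      ∑ o ∈ (Finset.univ : Finset (Option (Fin n))).filter (fun o => o.isSome = ε i), m o (s i) := by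
    intro i
    cases ε i
    · simp [mixMeasure, m, Finset.sum_filter, Fintype.sum_option]
    · simp [mixMeasure, m, Finset.sum_filter, Fintype.sum_option]
  simp_rw [h1]
  rw [Finset.prod_univ_sum]
  have h2 : Fintype.piFinset (fun i => (Finset.univ : Finset (Option (Fin n))).filter (fun o => o.isSome = ε i))
      = (Finset.univ : Finset (Fin k → Option (Fin n))).filter
        (fun σ => (fun i => (σ i).isSome) = ε) := by
    ext σ
    simp [funext_iff]
  rw [h2]
  refine Finset.sum_congr rfl fun σ _ => ?_
  rw [Measure.smul_apply, Measure.map_apply (measurable_val X σ) (MeasurableSet.univ_pi hs)]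
  have h3 : (fun w => val X w σ) ⁻¹' (Set.univ.pi s) =
      Set.univ.pi (fun i => (σ i).elim (s i) (fun j => {_w | X j ∈ s i})) := by
    ext w
    simp only [Set.mem_preimage, Set.mem_univ_pi, val]
    refine forall_congr' fun i => ?_
    cases σ i <;> simp
  rw [h3, Measure.pi_pi, ENNReal.smul_def, smul_eq_mul, ENNReal.ofNNReal_finsetProd,
    ← Finset.prod_mul_distrib]
  refine Finset.prod_congr rfl fun i _ => ?_
  cases h : σ i with
  | none => simp [m]
  | some j =>
    simp only [m, Option.elim, ENNReal.coe_one, one_mul]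
    rw [Measure.dirac_apply' _ (hs i)]
    by_cases hj : X j ∈ s i <;> simp [hj]

lemma empInt_eq (hdiag : MeasurableSet {p : E × E | p.1 = p.2}) {n k : ℕ} (a : ℝ)
    (X : Fin n → E) (f : (Fin k → E) → ℝ) (hG : Good P X f)
    (hinj : ∀ σ : Fin k → Option (Fin n), PInj σ →
      ∀ᵐ w ∂(Measure.pi fun _ : Fin k => P), Function.Injective (val X w σ)) :
    empInt P n a X k f = (Real.sqrt a)⁻¹ ^ k *
      ∑ σ : Fin k → Option (Fin n), open Classical in if PInj σ then cw σ * GI P X f σ else 0 := by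
  classical
  have hI := measurableSet_inj hdiag (Fin k)
  unfold empInt
  congr 1
  rw [← Finset.sum_fiberwise (Finset.univ : Finset (Fin k → Option (Fin n)))
    (fun σ => fun i => (σ i).isSome)]
  refine Finset.sum_congr rfl fun ε _ => ?_
  rw [← integral_indicator hI, pi_mix]
  -- the behaviour of the indicator under each labelling
  have hnot : ∀ σ : Fin k → Option (Fin n), ¬ PInj σ →
      ({u : Fin k → E | Function.Injective u}.indicator f)
        =ᵐ[Measure.map (fun w => val X w σ) (Measure.pi fun _ : Fin k => P)] 0 := by
    intro σ hσ
    have : ∀ᵐ u ∂(Measure.map (fun w => val X w σ) (Measure.pi fun _ : Fin k => P)),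
        u ∈ {u : Fin k → E | Function.Injective u}ᶜ := by
      refine (ae_map_iff (measurable_val X σ).aemeasurable hI.compl).2 ?_
      refine Eventually.of_forall fun w hw => hσ fun i i' h1 _ => ?_
      rename_i h2
      refine hw ?_
      simp only [val, h1]
      cases h3 : σ i' with
      | none => rw [h1] at h2; exact absurd h3 h2
      | some j => rfl
    filter_upwards [this] with u hu
    exact Set.indicator_of_notMem hu f
  have hyes : ∀ σ : Fin k → Option (Fin n), PInj σ →
      ({u : Fin k → E | Function.Injective u}.indicator f)
        =ᵐ[Measure.map (fun w => val X w σ) (Measure.pi fun _ : Fin k => P)] f := by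
    intro σ hσ
    have : ∀ᵐ u ∂(Measure.map (fun w => val X w σ) (Measure.pi fun _ : Fin k => P)),
        u ∈ {u : Fin k → E | Function.Injective u} := by
      refine (ae_map_iff (measurable_val X σ).aemeasurable hI).2 ?_
      exact hinj σ hσ
    filter_upwards [this] with u hu
    exact Set.indicator_of_mem hu f
  rw [integral_finsetSum_measure, Finset.mul_sum]
  · refine Finset.sum_congr rfl fun σ hσ => ?_
    rw [Finset.mem_filter] at hσ
    rw [integral_smul_nnreal_measure]
    by_cases h : PInj σ
    · rw [if_pos h, integral_congr_ae (hyes σ h),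
        integral_map (measurable_val X σ).aemeasurable (hG σ h).1]
      rw [NNReal.smul_def, smul_eq_mul, ← mul_assoc]
      congr 1
      rw [cw, ← Finset.prod_const, Finset.prod_filter]
      push_cast
      rw [← Finset.prod_mul_distrib]
      refine Finset.prod_congr rfl fun i _ => ?_
      rw [← hσ.2]
      cases h : σ i <;> simp [h]
    · rw [if_neg h, integral_congr_ae (hnot σ h)]
      simp
  · intro σ _
    refine Integrable.smul_measure_nnreal ?_
    by_cases h : PInj σ
    · exact (hG σ h).congr (hyes σ h).symm
    · exact (integrable_zero _ _ _).congr (hnot σ h).symm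

end meas

section comb

lemma val_elim {E α β : Type*} {n : ℕ} (X : Fin n → E) (u : α → E) (w : β → E)
    (τ : α → Option (Fin n)) :
    Sum.elim (val X u τ) w = val X (Sum.elim u w) (Sum.elim τ (fun _ => none)) := by
  ext i
  cases i <;> rfl

lemma reindex {T D Q : Type*} [Fintype T] [Fintype D] [Fintype Q] [DecidableEq T] [DecidableEq Q] {n : ℕ} (e : Q → T ⊕ D)
    (he : Function.Injective e) (hsurj : ∀ t, ∃ q, e q = Sum.inl t)
    (Φ : (Q → Option (Fin n)) → ℝ) (p : ℕ)
    (hp : Fintype.card {q // (e q).isRight = true} = p) :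
    (-(n : ℝ)) ^ p * ∑ τ : T → Option (Fin n), (open Classical in
        if PInj τ then cw τ * Φ (Sum.elim τ (fun _ => none) ∘ e) else 0) =
      ∑ σ : Q → Option (Fin n), (open Classical in
        if PInj σ ∧ (∀ q, (e q).isRight = true → σ q = none) then cw σ * Φ σ else 0) := by
  classical
  choose ψ hψ using hsurj
  have hψi : Function.Injective ψ := fun t t' h => by
    have := hψ t
    rw [h, hψ t'] at this
    simpa using this.symm
  rw [Finset.mul_sum]
  refine Fintype.sum_of_injective (fun τ => Sum.elim τ (fun _ => none) ∘ e) ?_ _ _ ?_ ?_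
  · intro τ τ' h
    ext1 t
    have := congrFun h (ψ t)
    simpa [hψ] using this
  · intro σ hσ
    rw [if_neg]
    rintro ⟨_, h2⟩
    refine hσ ⟨fun t => σ (ψ t), ?_⟩
    ext1 q
    simp only [Function.comp]
    cases hq : e q with
    | inl t =>
      have : q = ψ t := he (by rw [hq, hψ])
      simp [this]
    | inr d => simp [h2 q (by simp [hq])]
  · intro τ
    have h1 : PInj (Sum.elim τ (fun _ => none) ∘ e) ↔ PInj τ := by
      constructor
      · intro h t t' htt hn
        exact hψi (h (ψ t) (ψ t') (by simpa [hψ] using htt) (by simpa [hψ] using hn))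
      · intro h q q' hqq hn
        simp only [Function.comp] at hqq hn
        apply he
        cases hq : e q with
        | inr d => simp [hq] at hn
        | inl t =>
          cases hq' : e q' with
          | inr d => rw [hqq] at hn; simp [hq'] at hn
          | inl t' =>
            simp only [hq, hq', Sum.elim_inl] at hqq hn
            rw [h t t' hqq hn]
    have h2 : ∀ q, (e q).isRight = true → (Sum.elim τ (fun _ => none) ∘ e) q = none := by
      intro q hq
      simp only [Function.comp]
      cases h : e q with
      | inl t => simp [h] at hq
      | inr d => rfl
    by_cases h : PInj τ
    · rw [if_pos h, if_pos ⟨h1.2 h, h2⟩, ← mul_assoc]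
      congr 1
      rw [cw, cw, ← Finset.prod_filter_mul_prod_filter_not Finset.univ (fun q => (e q).isRight = true)]
      congr 1
      · rw [← hp, Fintype.card_subtype, ← Finset.prod_const]
        refine Finset.prod_congr rfl fun q hq => ?_
        rw [h2 q (by simpa using hq)]; rfl
      · refine Finset.prod_bij (fun t _ => ψ t) ?_ ?_ ?_ ?_
        · intro t _; simp [hψ]
        · intro t _ t' _ h; exact hψi h
        · intro q hq
          cases h : e q with
          | inr d => simp [h] at hq
          | inl t => exact ⟨t, Finset.mem_univ _, he (by rw [h, hψ])⟩
        · intro t _; simp [hψ]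
    · rw [if_neg h, if_neg fun h' => h (h1.1 h'.1), mul_zero]

/-- Exactness of a diagram for a pair of labellings. -/
def Exact {n k1 k2 l : ℕ} (j1 : Fin l ↪ Fin k1) (j2 : Fin l ↪ Fin k2)
    (τ1 : Fin k1 → Option (Fin n)) (τ2 : Fin k2 → Option (Fin n)) : Prop :=
  ∀ i i', (τ1 i = τ2 i' ∧ τ1 i ≠ none) ↔ ∃ s, j1 s = i ∧ j2 s = i'

lemma count {n k1 k2 : ℕ} (τ1 : Fin k1 → Option (Fin n)) (τ2 : Fin k2 → Option (Fin n))
    (h1 : PInj τ1) (h2 : PInj τ2) :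
    ∑ l ∈ Finset.range (min k1 k2 + 1), ((l.factorial : ℝ))⁻¹ *
      ∑ j1 : Fin l ↪ Fin k1, ∑ j2 : Fin l ↪ Fin k2,
        (open Classical in if Exact j1 j2 τ1 τ2 then (1 : ℝ) else 0) = 1 := by
  classical
  let M := {p : Fin k1 × Fin k2 // τ1 p.1 = τ2 p.2 ∧ τ1 p.1 ≠ none}
  have hfst : ∀ p q : M, p.1.1 = q.1.1 → p = q := by
    rintro ⟨⟨a, b⟩, h, h'⟩ ⟨⟨c, d⟩, k, k'⟩ e
    simp only at e h k h' k'
    subst e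
    have : b = d := h2 b d (by rw [← h, ← k]) (by rw [← h]; exact h')
    subst this; rfl
  have hsnd : ∀ p q : M, p.1.2 = q.1.2 → p = q := by
    rintro ⟨⟨a, b⟩, h, h'⟩ ⟨⟨c, d⟩, k, k'⟩ e
    simp only at e h k h' k'
    subst e
    have : a = c := h1 a c (by rw [h, k]) h'
    subst this; rfl
  have hM1 : Fintype.card M ≤ k1 := by
    simpa using Fintype.card_le_of_injective (fun p : M => p.1.1) fun p q h => hfst p q h
  have hM2 : Fintype.card M ≤ k2 := by
    simpa using Fintype.card_le_of_injective (fun p : M => p.1.2) fun p q h => hsnd p q h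
  have key : ∀ l, ∑ j1 : Fin l ↪ Fin k1, ∑ j2 : Fin l ↪ Fin k2,
        (if Exact j1 j2 τ1 τ2 then (1 : ℝ) else 0) = (Fintype.card (Fin l ≃ M) : ℝ) := by
    intro l
    rw [← Fintype.sum_prod_type' (f := fun (j1 : Fin l ↪ Fin k1) (j2 : Fin l ↪ Fin k2) =>
      (if Exact j1 j2 τ1 τ2 then (1 : ℝ) else 0)), Finset.sum_boole, ← Fintype.card_subtype]
    congr 1
    refine Fintype.card_congr ?_
    refine Equiv.ofBijective (fun j => Equiv.ofBijective
      (fun s => (⟨(j.1.1 s, j.1.2 s), (j.2 _ _).2 ⟨s, rfl, rfl⟩⟩ : M)) ⟨?_, ?_⟩) ⟨?_, ?_⟩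
    · intro s s' h
      have h' := congrArg (fun m : M => m.1.1) h
      exact j.1.1.injective h'
    · rintro ⟨⟨a, b⟩, h⟩
      obtain ⟨s, hs1, hs2⟩ := (j.2 a b).1 h
      exact ⟨s, by simp [hs1, hs2]⟩
    · rintro ⟨⟨a, b⟩, h⟩ ⟨⟨c, d⟩, h'⟩ heq
      have : ∀ s, (a s, b s) = (c s, d s) := fun s => congrArg Subtype.val (congrFun (congrArg (fun e : Fin l ≃ M => (e : Fin l → M)) heq) s)
      simp only [Prod.mk.injEq] at this
      have e1 : a = c := by ext1 s; exact (this s).1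
      have e2 : b = d := by ext1 s; exact (this s).2
      subst e1; subst e2; rfl
    · intro e
      refine ⟨⟨(⟨fun s => (e s).1.1, fun s s' h => e.injective (hfst _ _ h)⟩,
        ⟨fun s => (e s).1.2, fun s s' h => e.injective (hsnd _ _ h)⟩), ?_⟩, ?_⟩
      · intro i i'
        constructor
        · intro h
          refine ⟨e.symm ⟨(i, i'), h⟩, ?_, ?_⟩
          · show (e (e.symm ⟨(i, i'), h⟩)).1.1 = i
            rw [Equiv.apply_symm_apply]
          · show (e (e.symm ⟨(i, i'), h⟩)).1.2 = i'
            rw [Equiv.apply_symm_apply]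
        · rintro ⟨s, rfl, rfl⟩
          exact (e s).2
      · ext1 s
        rfl
  simp_rw [key]
  rw [Finset.sum_eq_single (Fintype.card M)]
  · rw [Fintype.card_equiv (Fintype.equivFin M).symm, Fintype.card_fin]
    exact inv_mul_cancel₀ (by positivity)
  · intro l _ hl
    have : IsEmpty (Fin l ≃ M) := ⟨fun e => hl (by simpa using Fintype.card_congr e)⟩
    simp
  · intro h
    simp at h
    omega

variable {k1 k2 l : ℕ} (j1 : Fin l ↪ Fin k1) (j2 : Fin l ↪ Fin k2)

/-- The variables of a diagram. -/
abbrev QQ (k1 : ℕ) {k2 l : ℕ} (j2 : Fin l ↪ Fin k2) : Type :=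
  Fin k1 ⊕ {i : Fin k2 // ¬ ∃ s, j2 s = i}

open Classical in
/-- The second-row variables inside the diagram variables. -/
noncomputable def ey (i : Fin k2) : QQ k1 j2 :=
  if hm : ∃ s, j2 s = i then Sum.inl (j1 (Classical.choose hm)) else Sum.inr ⟨i, hm⟩

lemma ey_j2 (s : Fin l) : ey j1 j2 (j2 s) = Sum.inl (j1 s) := by
  have hm : ∃ s', j2 s' = j2 s := ⟨s, rfl⟩
  rw [ey, dif_pos hm, j2.injective (Classical.choose_spec hm)]

lemma ey_inr (i : {i : Fin k2 // ¬ ∃ s, j2 s = i}) : ey j1 j2 i.1 = Sum.inr i := by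
  rw [ey, dif_neg i.2]

lemma ey_inj : Function.Injective (ey j1 j2) := by
  intro i i' h
  by_cases hi : ∃ s, j2 s = i
  · obtain ⟨s, rfl⟩ := hi
    by_cases hi' : ∃ s, j2 s = i'
    · obtain ⟨s', rfl⟩ := hi'
      rw [ey_j2, ey_j2] at h
      rw [j1.injective (Sum.inl_injective h)]
    · rw [ey_j2, ey_inr j1 j2 ⟨i', hi'⟩] at h
      cases h
  · by_cases hi' : ∃ s, j2 s = i'
    · obtain ⟨s', rfl⟩ := hi'
      rw [ey_j2, ey_inr j1 j2 ⟨i, hi⟩] at h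
      cases h
    · rw [ey_inr j1 j2 ⟨i, hi⟩, ey_inr j1 j2 ⟨i', hi'⟩] at h
      simpa using h

/-- The glued function of the diagram variables. -/
noncomputable def Ff {E : Type*} (f : (Fin k1 → E) → ℝ) (g : (Fin k2 → E) → ℝ) (q : QQ k1 j2 → E) : ℝ :=
  f (q ∘ Sum.inl) * g (q ∘ ey j1 j2)

lemma cw_split {n : ℕ} (σ : QQ k1 j2 → Option (Fin n)) (hs : ∀ s, σ (Sum.inl (j1 s)) ≠ none) :
    cw σ = cw (σ ∘ Sum.inl) * cw (σ ∘ ey j1 j2) := by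
  classical
  rw [cw, Fintype.prod_sum_type, cw, cw]
  congr 1
  refine Fintype.prod_of_injective (fun b : {i : Fin k2 // ¬ ∃ s, j2 s = i} => b.1) Subtype.val_injective _ _ ?_ ?_
  · intro i hi
    have : ∃ s, j2 s = i := by
      by_contra h
      exact hi ⟨⟨i, h⟩, rfl⟩
    obtain ⟨s, rfl⟩ := this
    simp only [Function.comp, ey_j2]
    cases h : σ (Sum.inl (j1 s)) with
    | none => exact absurd h (hs s)
    | some j => rfl
  · intro b
    simp only [Function.comp, ey_inr]

lemma pinj_iff {n : ℕ} (σ : QQ k1 j2 → Option (Fin n)) :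
    (PInj σ ∧ ∀ s, σ (Sum.inl (j1 s)) ≠ none) ↔
      (PInj (σ ∘ Sum.inl) ∧ PInj (σ ∘ ey j1 j2) ∧ Exact j1 j2 (σ ∘ Sum.inl) (σ ∘ ey j1 j2)) := by
  constructor
  · rintro ⟨h, hs⟩
    refine ⟨fun i i' hii hn => Sum.inl_injective (h _ _ hii hn),
      fun i i' hii hn => ey_inj j1 j2 (h _ _ hii hn), fun i i' => ⟨?_, ?_⟩⟩
    · rintro ⟨h1, h2⟩
      have := h _ _ h1 h2
      by_cases hi' : ∃ s, j2 s = i'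
      · obtain ⟨s', rfl⟩ := hi'
        rw [ey_j2] at this
        exact ⟨s', (Sum.inl_injective this).symm, rfl⟩
      · rw [ey_inr j1 j2 ⟨i', hi'⟩] at this
        cases this
    · rintro ⟨s, rfl, rfl⟩
      simp only [Function.comp, ey_j2]
      exact ⟨trivial, hs s⟩
  · rintro ⟨h1, h2, h3⟩
    refine ⟨?_, fun s => ((h3 (j1 s) (j2 s)).2 ⟨s, rfl, rfl⟩).2⟩
    rintro (i | b) (i' | b') hqq hn
    · rw [h1 i i' hqq hn]
    · obtain ⟨s, -, hs⟩ := (h3 i b'.1).1 ⟨by simpa [ey_inr] using hqq, hn⟩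
      exact absurd ⟨s, hs⟩ b'.2
    · obtain ⟨s, -, hs⟩ := (h3 i' b.1).1 ⟨by simpa [ey_inr] using hqq.symm, by
        simp only [Function.comp]; rw [← hqq]; exact hn⟩
      exact absurd ⟨s, hs⟩ b.2
    · have := h2 b.1 b'.1 (by simpa [ey_inr] using hqq) (by simpa [ey_inr] using hn)
      rw [Subtype.ext this]

lemma sum_pairs {n : ℕ} (Φ : (Fin k1 → Option (Fin n)) → (Fin k2 → Option (Fin n)) → ℝ)
    (H : (QQ k1 j2 → Option (Fin n)) → ℝ)
    (hH : ∀ σ : QQ k1 j2 → Option (Fin n), PInj σ → (∀ s, σ (Sum.inl (j1 s)) ≠ none) →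
      H σ = Φ (σ ∘ Sum.inl) (σ ∘ ey j1 j2)) :
    ∑ σ : QQ k1 j2 → Option (Fin n), (open Classical in
      if PInj σ ∧ ∀ s, σ (Sum.inl (j1 s)) ≠ none then H σ else 0) =
    ∑ τ1 : Fin k1 → Option (Fin n), ∑ τ2 : Fin k2 → Option (Fin n), (open Classical in
      if PInj τ1 ∧ PInj τ2 ∧ Exact j1 j2 τ1 τ2 then Φ τ1 τ2 else 0) := by
  classical
  rw [← Fintype.sum_prod_type' (f := fun (τ1 : Fin k1 → Option (Fin n)) (τ2 : Fin k2 → Option (Fin n)) =>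
    if PInj τ1 ∧ PInj τ2 ∧ Exact j1 j2 τ1 τ2 then Φ τ1 τ2 else 0)]
  refine Fintype.sum_of_injective (fun σ => (σ ∘ Sum.inl, σ ∘ ey j1 j2)) ?_ _ _ ?_ ?_
  · intro σ σ' h
    simp only [Prod.mk.injEq] at h
    ext1 q
    rcases q with i | b
    · exact congrFun h.1 i
    · have := congrFun h.2 b.1
      simpa [ey_inr] using this
  · rintro ⟨τ1, τ2⟩ hτ
    rw [if_neg]
    rintro ⟨h1, h2, h3⟩
    refine hτ ⟨Sum.elim τ1 (fun b => τ2 b.1), ?_⟩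
    simp only [Prod.mk.injEq]
    refine ⟨by ext1 i; rfl, ?_⟩
    ext1 i
    simp only [Function.comp]
    by_cases hi : ∃ s, j2 s = i
    · obtain ⟨s, rfl⟩ := hi
      rw [ey_j2]
      exact ((h3 (j1 s) (j2 s)).2 ⟨s, rfl, rfl⟩).1
    · rw [ey_inr j1 j2 ⟨i, hi⟩]; rfl
  · intro σ
    by_cases h : PInj σ ∧ ∀ s, σ (Sum.inl (j1 s)) ≠ none
    · rw [if_pos h, if_pos ((pinj_iff j1 j2 σ).1 h), hH σ h.1 h.2]
    · rw [if_neg h, if_neg fun h' => h ((pinj_iff j1 j2 σ).2 h')]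

end comb

section eS
variable {k1 k2 l : ℕ} (j1 : Fin l ↪ Fin k1) (j2 : Fin l ↪ Fin k2) (S : Finset (Fin l))

/-- Surviving first-row indices. -/
def AA : Finset (Fin k1) := Finset.univ.filter fun i => ∀ s ∈ S, j1 s ≠ i
/-- Unmatched second-row indices. -/
def BB : Finset (Fin k2) := Finset.univ.filter fun i => ∀ s : Fin l, j2 s ≠ i

lemma card_AA : (AA j1 S).card + S.card = k1 := by
  classical
  have : AA j1 S = (S.map j1)ᶜ := by
    ext i; simp [AA]
  rw [this, ← Finset.card_map j1, Finset.card_compl_add_card, Fintype.card_fin]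

lemma card_BB : (BB j2).card + l = k2 := by
  classical
  have : BB j2 = ((Finset.univ : Finset (Fin l)).map j2)ᶜ := by
    ext i; simp [BB]
  have h : ((Finset.univ : Finset (Fin l)).map j2).card = l := by simp
  have h2 := Finset.card_compl_add_card ((Finset.univ : Finset (Fin l)).map j2)
  rw [← this, h, Fintype.card_fin] at h2
  exact h2

lemma mem_BB (b : {i : Fin k2 // ¬ ∃ s, j2 s = i}) : b.1 ∈ BB j2 := by
  have := b.2
  simp only [not_exists] at this
  simp [BB, this]

open Classical in
/-- Position of the diagram variables among the free and the integrated variables. -/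
noncomputable def eS {K : ℕ} (hK : (AA j1 S).card + (BB j2).card = K) :
    QQ k1 j2 → Fin K ⊕ Fin k1
  | Sum.inl i => if hi : i ∈ AA j1 S then
      Sum.inl (Fin.castLE (le_trans (Nat.le_add_right _ _) hK.le)
        (((AA j1 S).orderIsoOfFin rfl).symm ⟨i, hi⟩)) else Sum.inr i
  | Sum.inr b => Sum.inl ⟨(AA j1 S).card + (((BB j2).orderIsoOfFin rfl).symm ⟨b.1, mem_BB j2 b⟩ : Fin _),
      lt_of_lt_of_le (Nat.add_lt_add_left (Fin.is_lt _) _) hK.le⟩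

lemma eS_inj {K : ℕ} (hK : (AA j1 S).card + (BB j2).card = K) :
    Function.Injective (eS j1 j2 S hK) := by
  rintro (i | b) (i' | b') h
  · by_cases hi : i ∈ AA j1 S <;> by_cases hi' : i' ∈ AA j1 S
    · simp only [eS, dif_pos hi, dif_pos hi', Sum.inl.injEq, Fin.castLE_inj,
        EmbeddingLike.apply_eq_iff_eq, Subtype.mk.injEq] at h
      rw [h]
    · simp [eS, hi, hi'] at h
    · simp [eS, hi, hi'] at h
    · simp only [eS, dif_neg hi, dif_neg hi', Sum.inr.injEq] at h
      rw [h]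
  · by_cases hi : i ∈ AA j1 S
    · simp only [eS, dif_pos hi, Sum.inl.injEq] at h
      have := congrArg Fin.val h
      simp only [Fin.val_castLE] at this
      have h2 := (((AA j1 S).orderIsoOfFin rfl).symm ⟨i, hi⟩).is_lt
      omega
    · simp [eS, hi] at h
  · by_cases hi : i' ∈ AA j1 S
    · simp only [eS, dif_pos hi, Sum.inl.injEq] at h
      have := congrArg Fin.val h
      simp only [Fin.val_castLE] at this
      have h2 := (((AA j1 S).orderIsoOfFin rfl).symm ⟨i', hi⟩).is_lt
      omega
    · simp [eS, hi] at h
  · simp only [eS, Sum.inl.injEq, Fin.mk.injEq, Nat.add_left_cancel_iff] at h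
    have h2 := ((BB j2).orderIsoOfFin rfl).symm.injective (Fin.ext h)
    simp only [Subtype.mk.injEq] at h2
    rw [Subtype.ext h2]

lemma eS_surj {K : ℕ} (hK : (AA j1 S).card + (BB j2).card = K) (t : Fin K) :
    ∃ q, eS j1 j2 S hK q = Sum.inl t := by
  by_cases ht : t.1 < (AA j1 S).card
  · let x := (AA j1 S).orderIsoOfFin rfl ⟨t.1, ht⟩
    refine ⟨Sum.inl x.1, ?_⟩
    simp only [eS]
    rw [dif_pos x.2]
    have hx : ((AA j1 S).orderIsoOfFin rfl).symm ⟨x.1, x.2⟩ = ⟨t.1, ht⟩ :=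
      ((AA j1 S).orderIsoOfFin rfl).symm_apply_apply _
    rw [hx]
    rfl
  · have h2 : t.1 - (AA j1 S).card < (BB j2).card := by have := t.2; omega
    let x := (BB j2).orderIsoOfFin rfl ⟨_, h2⟩
    have hx : ¬ ∃ s, j2 s = x.1 := by
      have := x.2
      simp only [BB, Finset.mem_filter] at this
      rintro ⟨s, hs⟩
      exact this.2 s hs
    refine ⟨Sum.inr ⟨x.1, hx⟩, ?_⟩
    simp only [eS, Sum.inl.injEq]
    ext
    have hx' : ((BB j2).orderIsoOfFin rfl).symm ⟨x.1, mem_BB j2 ⟨x.1, hx⟩⟩ = ⟨_, h2⟩ :=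
      ((BB j2).orderIsoOfFin rfl).symm_apply_apply _
    have hx2 := congrArg Fin.val hx'
    simp only at hx2 ⊢
    omega

lemma eS_right {K : ℕ} (hK : (AA j1 S).card + (BB j2).card = K) (q : QQ k1 j2) :
    (eS j1 j2 S hK q).isRight = true ↔ ∃ s ∈ S, q = Sum.inl (j1 s) := by
  rcases q with i | b
  · by_cases hi : i ∈ AA j1 S
    · simp only [eS, dif_pos hi]
      simp only [AA, Finset.mem_filter] at hi
      constructor
      · intro h; simp at h
      · rintro ⟨s, hs, h⟩
        exact absurd (Sum.inl_injective h).symm (hi.2 s hs)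
    · simp only [eS, dif_neg hi]
      simp only [AA, Finset.mem_filter, Finset.mem_univ, true_and, not_forall, not_not] at hi
      obtain ⟨s, hs, h⟩ := hi
      simp only [Sum.isRight_inr, true_iff]
      exact ⟨s, hs, by rw [h]⟩
  · simp [eS]

lemma card_right {K : ℕ} (hK : (AA j1 S).card + (BB j2).card = K) :
    Fintype.card {q // (eS j1 j2 S hK q).isRight = true} = S.card := by
  classical
  rw [Fintype.card_subtype, ← Finset.card_map (j1.trans ⟨Sum.inl, Sum.inl_injective⟩ : Fin l ↪ QQ k1 j2)]
  congr 1
  ext q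
  simp only [Finset.mem_filter, Finset.mem_univ, true_and, eS_right, Finset.mem_map]
  constructor
  · rintro ⟨s, hs, rfl⟩; exact ⟨s, hs, rfl⟩
  · rintro ⟨s, hs, rfl⟩; exact ⟨s, hs, rfl⟩

lemma coloredFun_eq {E : Type*} [MeasurableSpace E] [Nonempty E] (P : Measure E)
    (p : ℕ) (hK : (AA j1 S).card + (BB j2).card = k1 + k2 - l - p)
    (f : (Fin k1 → E) → ℝ) (g : (Fin k2 → E) → ℝ) (v : Fin (k1 + k2 - l - p) → E) :
    coloredFun P k1 k2 l p j1 j2 S f g v =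
      ∫ w : Fin k1 → E, Ff j1 j2 f g (Sum.elim v w ∘ eS j1 j2 S hK) ∂(Measure.pi fun _ => P) := by
  have hA : (AA j1 S).card ≤ k1 + k2 - l - p := by omega
  unfold coloredFun
  refine integral_congr_ae (Eventually.of_forall fun w => ?_)
  have hx : (fun i : Fin k1 =>
        if hia : i ∈ AA j1 S ∧ (AA j1 S).card ≤ k1 + k2 - l - p then
          v (Fin.castLE hia.2 (((AA j1 S).orderIsoOfFin rfl).symm ⟨i, hia.1⟩))
        else w i) = (Sum.elim v w ∘ eS j1 j2 S hK) ∘ Sum.inl := by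
    ext1 i
    by_cases hi : i ∈ AA j1 S
    · rw [dif_pos ⟨hi, hA⟩]
      simp [eS, hi]
    · rw [dif_neg fun h => hi h.1]
      simp [eS, hi]
  have hy : (fun i : Fin k2 =>
      if hm : ∃ s, j2 s = i then ((Sum.elim v w ∘ eS j1 j2 S hK) ∘ Sum.inl) (j1 (Classical.choose hm))
        else if hib : i ∈ BB j2 ∧ (AA j1 S).card + (BB j2).card ≤ k1 + k2 - l - p then
          v ⟨(AA j1 S).card + (((BB j2).orderIsoOfFin rfl).symm ⟨i, hib.1⟩ : Fin (BB j2).card),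
             lt_of_lt_of_le (Nat.add_lt_add_left (Fin.is_lt _) _) hib.2⟩
        else Classical.arbitrary E) = (Sum.elim v w ∘ eS j1 j2 S hK) ∘ ey j1 j2 := by
    ext1 i
    by_cases hi : ∃ s, j2 s = i
    · rw [dif_pos hi]
      simp [ey, hi]
    · have hb : i ∈ BB j2 := mem_BB j2 ⟨i, hi⟩
      rw [dif_neg hi, dif_pos ⟨hb, hK.le⟩]
      simp only [Function.comp]
      rw [ey_inr j1 j2 ⟨i, hi⟩]
      simp [eS]
  show _ = f ((Sum.elim v w ∘ eS j1 j2 S hK) ∘ Sum.inl) * g ((Sum.elim v w ∘ eS j1 j2 S hK) ∘ ey j1 j2)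
  rw [← hx] at hy
  rw [← hy, ← hx]
  rfl

end eS

section integrals
variable {E : Type*} [MeasurableSpace E] (P : Measure E) [IsProbabilityMeasure P]

lemma int_comp {Q T D : Type*} [Fintype Q] [Fintype T] [Fintype D] {n : ℕ} (X : Fin n → E)
    (F : (Q → E) → ℝ) (hG : Good P X F) (e : Q → T ⊕ D) (he : Function.Injective e)
    (σ : Q → Option (Fin n)) (hσ : PInj σ) :
    ∫ u : T → E, ∫ w : D → E, F (val X (Sum.elim u w ∘ e) σ) ∂(Measure.pi fun _ => P)
      ∂(Measure.pi fun _ => P) = GI P X F σ := by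
  have hmp := (mp_comp P e he).comp (mp_elim P (α := T) (β := D))
  have h1 : Integrable (fun q => F (val X q σ)) (Measure.pi fun _ : Q => P) :=
    (integrable_map_measure (hG σ hσ).1 (measurable_val X σ).aemeasurable).1 (hG σ hσ)
  have h2 := hmp.integrable_comp_of_integrable h1
  rw [integral_integral (f := fun u w => F (val X (Sum.elim u w ∘ e) σ)) h2, GI, ← hmp.map_eq, integral_map hmp.measurable.aemeasurable]
  · rfl
  · rw [hmp.map_eq]; exact h1.1

variable {k1 k2 l : ℕ} (j1 : Fin l ↪ Fin k1) (j2 : Fin l ↪ Fin k2) (S : Finset (Fin l))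

lemma integrable_Ff {f : (Fin k1 → E) → ℝ} {g : (Fin k2 → E) → ℝ}
    (hf : MemLp f 2 (Measure.pi fun _ => P)) (hg : MemLp g 2 (Measure.pi fun _ => P)) :
    Integrable (Ff j1 j2 f g) (Measure.pi fun _ => P) :=
  MemLp.integrable_mul (hf.comp_measurePreserving (mp_comp P (Sum.inl : Fin k1 → QQ k1 j2) Sum.inl_injective))
    (hg.comp_measurePreserving (mp_comp P _ (ey_inj j1 j2)))

lemma integrable_colored [Nonempty E] {f : (Fin k1 → E) → ℝ} {g : (Fin k2 → E) → ℝ}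
    (hf : MemLp f 2 (Measure.pi fun _ => P)) (hg : MemLp g 2 (Measure.pi fun _ => P))
    (p : ℕ) (hK : (AA j1 S).card + (BB j2).card = k1 + k2 - l - p) :
    Integrable (coloredFun P k1 k2 l p j1 j2 S f g) (Measure.pi fun _ => P) := by
  have hmp := (mp_comp P _ (eS_inj j1 j2 S hK)).comp (mp_elim P)
  have h2 := (hmp.integrable_comp_of_integrable (integrable_Ff P j1 j2 hf hg)).integral_prod_left
  have : coloredFun P k1 k2 l p j1 j2 S f g = fun v =>
      ∫ w : Fin k1 → E, Ff j1 j2 f g (Sum.elim v w ∘ eS j1 j2 S hK) ∂(Measure.pi fun _ => P) := by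
    ext1 v; exact coloredFun_eq j1 j2 S P p hK f g v
  rw [this]
  exact h2

lemma GI_colored [Nonempty E] {n : ℕ} (X : Fin n → E) {f : (Fin k1 → E) → ℝ} {g : (Fin k2 → E) → ℝ}
    (hG : Good P X (Ff j1 j2 f g))
    (p : ℕ) (hK : (AA j1 S).card + (BB j2).card = k1 + k2 - l - p)
    (τ : Fin (k1 + k2 - l - p) → Option (Fin n))
    (hτ : PInj (Sum.elim τ (fun _ => none) ∘ eS j1 j2 S hK)) :
    GI P X (coloredFun P k1 k2 l p j1 j2 S f g) τ =
      GI P X (Ff j1 j2 f g) (Sum.elim τ (fun _ => none) ∘ eS j1 j2 S hK) := by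
  rw [← int_comp P X _ hG _ (eS_inj j1 j2 S hK) _ hτ]
  unfold GI
  refine integral_congr_ae (Eventually.of_forall fun u => ?_)
  simp only
  rw [coloredFun_eq j1 j2 S P p hK]
  refine integral_congr_ae (Eventually.of_forall fun w => ?_)
  simp only
  rw [val_elim]
  rfl

lemma GI_pair {n : ℕ} (X : Fin n → E) {f : (Fin k1 → E) → ℝ} {g : (Fin k2 → E) → ℝ}
    (hG : Good P X (Ff j1 j2 f g)) (σ : QQ k1 j2 → Option (Fin n)) (hσ : PInj σ)
    (hs : ∀ s, σ (Sum.inl (j1 s)) ≠ none) :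
    GI P X (Ff j1 j2 f g) σ = GI P X f (σ ∘ Sum.inl) * GI P X g (σ ∘ ey j1 j2) := by
  have he : Function.Injective (Sum.map id Subtype.val : QQ k1 j2 → Fin k1 ⊕ Fin k2) :=
    Function.Injective.sumMap Function.injective_id Subtype.val_injective
  rw [← int_comp P X _ hG _ he _ hσ]
  unfold GI
  rw [← integral_mul_const]
  refine integral_congr_ae (Eventually.of_forall fun u => ?_)
  simp only
  rw [← integral_const_mul]
  refine integral_congr_ae (Eventually.of_forall fun w => ?_)
  simp only [Ff]
  congr 2
  ext1 i
  by_cases hi : ∃ s, j2 s = i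
  · obtain ⟨s, rfl⟩ := hi
    simp only [Function.comp, val, ey_j2]
    cases h : σ (Sum.inl (j1 s)) with
    | none => exact absurd h (hs s)
    | some j => rfl
  · simp only [Function.comp, val]
    rw [ey_inr j1 j2 ⟨i, hi⟩]
    rfl

end integrals

section final

lemma nn_smul {E : Type*} [MeasurableSpace E] (μ : Measure E) (c : ℝ≥0) (A : Set E) :
    (c • μ) A = (c : ℝ≥0∞) * μ A := rfl

lemma pi_le {E : Type*} [MeasurableSpace E] (P μ : Measure E) [IsProbabilityMeasure P]
    [SigmaFinite μ] (c : ℝ≥0) (h : P ≤ c • μ) (k : ℕ) :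
    (Measure.pi fun _ : Fin k => P) ≤ ((c : ℝ≥0∞) ^ k) • (Measure.pi fun _ : Fin k => μ) := by
  have h1 : (Measure.pi fun _ : Fin k => c • μ) = (c ^ k) • (Measure.pi fun _ : Fin k => μ) := by
    refine Measure.pi_eq fun s hs => ?_
    simp only [nn_smul, Measure.pi_pi, Finset.prod_mul_distrib,
      Finset.prod_const, Finset.card_univ, Fintype.card_fin, ENNReal.coe_pow]
  have h2 : (Measure.pi fun _ : Fin k => P) ≤ (Measure.pi fun _ : Fin k => c • μ) := by
    rw [Measure.le_iff]
    intro A hA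
    have : (Measure.pi fun _ : Fin k => P).toOuterMeasure ≤
        OuterMeasure.pi fun _ : Fin k => (c • μ).toOuterMeasure := by
      rw [OuterMeasure.le_pi]
      intro s _
      show (Measure.pi fun _ : Fin k => P) (Set.univ.pi s) ≤ _
      rw [Measure.pi_pi]
      exact Finset.prod_le_prod' fun i _ => h (s i)
    have e : (Measure.pi fun _ : Fin k => c • μ) A =
        (OuterMeasure.pi fun _ : Fin k => (c • μ).toOuterMeasure) A := by
      rw [Measure.pi, toMeasure_apply _ _ hA]
    rw [e]
    exact this A
  rw [h1] at h2
  refine h2.trans (le_of_eq ?_)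
  ext A _
  rw [nn_smul, Measure.smul_apply, smul_eq_mul, ENNReal.coe_pow]

lemma P_le {E : Type*} [MeasurableSpace E] (μ : Measure E) (a : ℕ → ℝ) (P : ℕ → Measure E)
    (h21 : Assumption21 μ a P) (n : ℕ) (hn : 1 ≤ n) :
    P n ≤ (Real.toNNReal (a n / n)) • μ := by
  obtain ⟨-, hpos, -, -, hmono, hlim⟩ := h21
  rw [Measure.le_iff]
  intro B hB
  have h1 : ENNReal.ofReal ((n : ℝ) / a n) * P n B ≤ μ B := by
    refine ge_of_tendsto (hlim B hB) ?_
    filter_upwards [eventually_ge_atTop n] with m hm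
    induction m, hm using Nat.le_induction with
    | base => exact le_rfl
    | succ m hm ih =>
      refine ih.trans ?_
      have := hmono B hB m (hn.trans hm)
      push_cast
      exact this
  have ha := hpos n hn
  have hn' : (0 : ℝ) < n := by exact_mod_cast hn
  calc P n B = ENNReal.ofReal (a n / n) * (ENNReal.ofReal ((n : ℝ) / a n) * P n B) := by
        rw [← mul_assoc, ← ENNReal.ofReal_mul (by positivity)]
        have : a n / n * (n / a n) = 1 := by field_simp
        rw [this]; simp
    _ ≤ ENNReal.ofReal (a n / n) * μ B := by gcongr
    _ = _ := by rw [nn_smul]; rfl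

variable {E : Type*} [MeasurableSpace E] [Nonempty E] (P : Measure E) [IsProbabilityMeasure P]

lemma good_sum {α ι : Type*} [Fintype α] {n : ℕ} (X : Fin n → E) (s : Finset ι)
    (f : ι → (α → E) → ℝ) (h : ∀ i ∈ s, Good P X (f i)) :
    Good P X (fun v => ∑ i ∈ s, f i v) ∧ ∀ σ, PInj σ →
      GI P X (fun v => ∑ i ∈ s, f i v) σ = ∑ i ∈ s, GI P X (f i) σ := by
  refine ⟨fun σ hσ => integrable_finsetSum _ fun i hi => h i hi σ hσ, fun σ hσ => ?_⟩
  unfold GI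
  exact integral_finsetSum _ fun i hi =>
    (integrable_map_measure (h i hi σ hσ).1 (measurable_val X σ).aemeasurable).1 (h i hi σ hσ)

lemma good_mul {α : Type*} [Fintype α] {n : ℕ} (X : Fin n → E) (c : ℝ)
    (f : (α → E) → ℝ) (h : Good P X f) :
    Good P X (fun v => c * f v) ∧ ∀ σ, GI P X (fun v => c * f v) σ = c * GI P X f σ := by
  refine ⟨fun σ hσ => (h σ hσ).const_mul c, fun σ => ?_⟩
  unfold GI
  exact integral_const_mul _ _

lemma scalar (k1 k2 l p n : ℕ) (a : ℝ) (ha : 0 < a) (hn : 1 ≤ n) (hpl : p ≤ l)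
    (h1 : l ≤ k1) (h2 : l ≤ k2) :
    Real.sqrt ((n : ℝ) / a) ^ (l + p) *
            ((k1.factorial * k2.factorial : ℝ) /
              ((k1 - l).factorial * (k2 - l).factorial * (l - p).factorial * p.factorial)) *
            ((Real.sqrt n)⁻¹ ^ (l - p)) * ((Real.sqrt a)⁻¹ ^ (k1 + k2 - l - p) *
      (((Fintype.card (Fin l ↪ Fin k1) * Fintype.card (Fin l ↪ Fin k2) *
        (Finset.powersetCard p (Finset.univ : Finset (Fin l))).card : ℕ) : ℝ))⁻¹) =
    (Real.sqrt a)⁻¹ ^ (k1 + k2) * ((l.factorial : ℝ)⁻¹ * (n : ℝ) ^ p) := by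
  have hn' : (0 : ℝ) < n := by exact_mod_cast hn
  have e1 : ((k1.descFactorial l : ℕ) : ℝ) * (k1 - l).factorial = k1.factorial := by
    rw [mul_comm]; exact_mod_cast Nat.factorial_mul_descFactorial h1
  have e2 : ((k2.descFactorial l : ℕ) : ℝ) * (k2 - l).factorial = k2.factorial := by
    rw [mul_comm]; exact_mod_cast Nat.factorial_mul_descFactorial h2
  have e3 : ((l.choose p : ℕ) : ℝ) * p.factorial * (l - p).factorial = l.factorial := by
    exact_mod_cast Nat.choose_mul_factorial_mul_factorial hpl
  rw [Fintype.card_embedding_eq, Fintype.card_embedding_eq, Finset.card_powersetCard]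
  simp only [Fintype.card_fin, Finset.card_univ]
  push_cast
  rw [Real.sqrt_div hn'.le, ← e1, ← e2, ← e3]
  have hx : 0 < Real.sqrt n := Real.sqrt_pos.2 hn'
  have hy : 0 < Real.sqrt a := Real.sqrt_pos.2 ha
  have hxx : (n : ℝ) ^ p = (Real.sqrt n) ^ (2 * p) := by
    rw [pow_mul, Real.sq_sqrt hn'.le]
  rw [hxx]
  have d1 : 0 < ((k1.descFactorial l : ℕ) : ℝ) := by
    exact_mod_cast Nat.descFactorial_pos.2 h1
  have d2 : 0 < ((k2.descFactorial l : ℕ) : ℝ) := by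
    exact_mod_cast Nat.descFactorial_pos.2 h2
  have d3 : 0 < ((l.choose p : ℕ) : ℝ) := by exact_mod_cast Nat.choose_pos hpl
  obtain ⟨m, rfl⟩ := Nat.exists_eq_add_of_le hpl
  obtain ⟨K, hK⟩ : ∃ K, k1 + k2 = K + (p + m) + p := ⟨k1 + k2 - (p + m) - p, by omega⟩
  have hK' : k1 + k2 - (p + m) - p = K := by omega
  rw [hK', hK]
  have hm : p + m - p = m := by omega
  rw [hm]
  generalize Real.sqrt n = x at *
  generalize Real.sqrt a = y at *
  have f1 : (0 : ℝ) < (k1 - (p + m)).factorial := by positivity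
  have f2 : (0 : ℝ) < (k2 - (p + m)).factorial := by positivity
  generalize ((k1 - (p + m)).factorial : ℝ) = A1 at *
  generalize ((k2 - (p + m)).factorial : ℝ) = A2 at *
  simp only [inv_pow, div_pow]
  field_simp
  ring

variable {k1 k2 : ℕ}

lemma colored_sum {n l : ℕ} (j1 : Fin l ↪ Fin k1) (j2 : Fin l ↪ Fin k2) (S : Finset (Fin l))
    (X : Fin n → E) {f : (Fin k1 → E) → ℝ} {g : (Fin k2 → E) → ℝ}
    (hG : Good P X (Ff j1 j2 f g))
    (p : ℕ) (hS : S.card = p) (hK : (AA j1 S).card + (BB j2).card = k1 + k2 - l - p) :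
    (n : ℝ) ^ p * ∑ τ : Fin (k1 + k2 - l - p) → Option (Fin n), (open Classical in
        if PInj τ then cw τ * GI P X (coloredFun P k1 k2 l p j1 j2 S f g) τ else 0) =
      ∑ σ : QQ k1 j2 → Option (Fin n), (open Classical in
        if PInj σ ∧ (∀ s ∈ S, σ (Sum.inl (j1 s)) = none) then
          (-1) ^ S.card * (cw σ * GI P X (Ff j1 j2 f g) σ) else 0) := by
  classical
  have h := reindex (eS j1 j2 S hK) (eS_inj j1 j2 S hK) (eS_surj j1 j2 S hK)
    (fun σ => if PInj σ then GI P X (Ff j1 j2 f g) σ else 0) p ((card_right j1 j2 S hK).trans hS)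
  have e1 : ∀ σ : QQ k1 j2 → Option (Fin n),
      (∀ q, (eS j1 j2 S hK q).isRight = true → σ q = none) ↔
        ∀ s ∈ S, σ (Sum.inl (j1 s)) = none := by
    intro σ
    simp only [eS_right]
    constructor
    · intro h s hs; exact h _ ⟨s, hs, rfl⟩
    · rintro h q ⟨s, hs, rfl⟩; exact h s hs
  have hpi : ∀ τ : Fin (k1 + k2 - l - p) → Option (Fin n), PInj τ →
      PInj (Sum.elim τ (fun _ => none) ∘ eS j1 j2 S hK) := by
    intro τ hτ q q' hqq hn
    simp only [Function.comp] at hqq hn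
    apply eS_inj j1 j2 S hK
    cases hq : eS j1 j2 S hK q with
    | inr d => simp [hq] at hn
    | inl t =>
      cases hq' : eS j1 j2 S hK q' with
      | inr d => rw [hqq] at hn; simp [hq'] at hn
      | inl t' =>
        simp only [hq, hq', Sum.elim_inl] at hqq hn
        rw [hτ t t' hqq hn]
  have h3 : (n : ℝ) ^ p = (-1) ^ p * (-(n : ℝ)) ^ p := by
    rw [← mul_pow]; simp
  rw [h3, mul_assoc]
  have h4 : ∑ τ : Fin (k1 + k2 - l - p) → Option (Fin n), (
        if PInj τ then cw τ * GI P X (coloredFun P k1 k2 l p j1 j2 S f g) τ else 0) =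
      ∑ τ : Fin (k1 + k2 - l - p) → Option (Fin n), (if PInj τ then cw τ *
        (fun σ => if PInj σ then GI P X (Ff j1 j2 f g) σ else 0)
          (Sum.elim τ (fun _ => none) ∘ eS j1 j2 S hK) else 0) := by
    refine Finset.sum_congr rfl fun τ _ => ?_
    by_cases hτ : PInj τ
    · simp only [if_pos hτ, if_pos (hpi τ hτ)]
      rw [GI_colored P j1 j2 S X hG p hK τ (hpi τ hτ)]
    · simp only [if_neg hτ]
  rw [h4, h, Finset.mul_sum]
  refine Finset.sum_congr rfl fun σ _ => ?_
  simp only [e1, hS]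
  by_cases hσ : PInj σ ∧ (∀ s ∈ S, σ (Sum.inl (j1 s)) = none)
  · simp only [if_pos hσ, if_pos hσ.1]
  · simp only [if_neg hσ, mul_zero]

lemma diagram_sum {n l : ℕ} (j1 : Fin l ↪ Fin k1) (j2 : Fin l ↪ Fin k2)
    (X : Fin n → E) {f : (Fin k1 → E) → ℝ} {g : (Fin k2 → E) → ℝ}
    (hG : Good P X (Ff j1 j2 f g)) :
    ∑ p ∈ Finset.range (l + 1), ∑ S ∈ Finset.powersetCard p (Finset.univ : Finset (Fin l)),
      (n : ℝ) ^ p * ∑ τ : Fin (k1 + k2 - l - p) → Option (Fin n), (open Classical in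
        if PInj τ then cw τ * GI P X (coloredFun P k1 k2 l p j1 j2 S f g) τ else 0) =
    ∑ τ1 : Fin k1 → Option (Fin n), ∑ τ2 : Fin k2 → Option (Fin n), (open Classical in
      if PInj τ1 ∧ PInj τ2 ∧ Exact j1 j2 τ1 τ2 then
        (cw τ1 * GI P X f τ1) * (cw τ2 * GI P X g τ2) else 0) := by
  classical
  rw [← sum_pairs j1 j2 (fun τ1 τ2 => (cw τ1 * GI P X f τ1) * (cw τ2 * GI P X g τ2))
    (fun σ => cw σ * GI P X (Ff j1 j2 f g) σ)]
  · have h1 : ∀ p ∈ Finset.range (l + 1),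
        ∀ S ∈ Finset.powersetCard p (Finset.univ : Finset (Fin l)),
      (n : ℝ) ^ p * ∑ τ : Fin (k1 + k2 - l - p) → Option (Fin n), (
        if PInj τ then cw τ * GI P X (coloredFun P k1 k2 l p j1 j2 S f g) τ else 0) =
      ∑ σ : QQ k1 j2 → Option (Fin n), (
        if PInj σ ∧ (∀ s ∈ S, σ (Sum.inl (j1 s)) = none) then
          (-1) ^ S.card * (cw σ * GI P X (Ff j1 j2 f g) σ) else 0) := by
      intro p _ S hS
      have hc := (Finset.mem_powersetCard.1 hS).2
      have c1 := card_AA j1 S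
      have c2 := card_BB j2
      exact colored_sum P j1 j2 S X hG p hc (by omega)
    rw [Finset.sum_congr rfl fun p hp => Finset.sum_congr rfl fun S hS => h1 p hp S hS]
    have h2 := Finset.sum_powerset (Finset.univ : Finset (Fin l)) (fun S =>
      ∑ σ : QQ k1 j2 → Option (Fin n), (
        if PInj σ ∧ (∀ s ∈ S, σ (Sum.inl (j1 s)) = none) then
          (-1) ^ S.card * (cw σ * GI P X (Ff j1 j2 f g) σ) else 0))
    rw [Finset.card_univ, Fintype.card_fin] at h2
    rw [← h2, Finset.sum_comm]
    refine Finset.sum_congr rfl fun σ _ => ?_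
    by_cases hσ : PInj σ
    · simp only [hσ, true_and]
      rw [← Finset.sum_filter]
      have h3 : ((Finset.univ : Finset (Fin l)).powerset).filter
          (fun S => ∀ s ∈ S, σ (Sum.inl (j1 s)) = none) =
          ((Finset.univ : Finset (Fin l)).filter fun s => σ (Sum.inl (j1 s)) = none).powerset := by
        ext S
        simp [Finset.subset_iff]
      rw [h3, ← Finset.sum_mul]
      have h4 := Finset.sum_powerset_neg_one_pow_card
        (x := (Finset.univ : Finset (Fin l)).filter fun s => σ (Sum.inl (j1 s)) = none)
      have h5 : ∑ m ∈ ((Finset.univ : Finset (Fin l)).filter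
          fun s => σ (Sum.inl (j1 s)) = none).powerset, (-1 : ℝ) ^ m.card =
          if ∀ s, σ (Sum.inl (j1 s)) ≠ none then 1 else 0 := by
        have := congrArg (Int.cast : ℤ → ℝ) h4
        push_cast at this
        rw [this]
        simp [Finset.filter_eq_empty_iff]
      rw [h5, ite_mul, one_mul, zero_mul]
    · simp [hσ]
  · intro σ hσ hs
    rw [cw_split j1 j2 σ hs, GI_pair P j1 j2 X hG σ hσ hs]
    ring

lemma core (hdiag : MeasurableSet {p : E × E | p.1 = p.2}) {n : ℕ} (hn : 1 ≤ n) (a : ℝ) (ha : 0 < a)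
    (X : Fin n → E) (f : (Fin k1 → E) → ℝ) (g : (Fin k2 → E) → ℝ)
    (hf : Good P X f) (hg : Good P X g)
    (hF : ∀ l ∈ Finset.range (min k1 k2 + 1), ∀ (j1 : Fin l ↪ Fin k1) (j2 : Fin l ↪ Fin k2),
      Good P X (Ff j1 j2 f g))
    (hC : ∀ l ∈ Finset.range (min k1 k2 + 1), ∀ p ∈ Finset.range (l + 1),
      ∀ (j1 : Fin l ↪ Fin k1) (j2 : Fin l ↪ Fin k2),
      ∀ S ∈ Finset.powersetCard p (Finset.univ : Finset (Fin l)),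
        Good P X (coloredFun P k1 k2 l p j1 j2 S f g))
    (hinj : ∀ k : ℕ, ∀ σ : Fin k → Option (Fin n), PInj σ →
      ∀ᵐ w ∂(Measure.pi fun _ : Fin k => P), Function.Injective (val X w σ)) :
    empInt P n a X k1 f * empInt P n a X k2 g =
        ∑ l ∈ Finset.range (min k1 k2 + 1), ∑ p ∈ Finset.range (l + 1),
          Real.sqrt ((n : ℝ) / a) ^ (l + p) *
            ((k1.factorial * k2.factorial : ℝ) /
              ((k1 - l).factorial * (k2 - l).factorial * (l - p).factorial * p.factorial)) *
            ((Real.sqrt n)⁻¹ ^ (l - p)) *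
            empInt P n a X (k1 + k2 - l - p) (avgColored P k1 k2 l p f g) := by
  classical
  -- the individual terms on the right
  have hterm : ∀ l ∈ Finset.range (min k1 k2 + 1), ∀ p ∈ Finset.range (l + 1),
      Real.sqrt ((n : ℝ) / a) ^ (l + p) *
            ((k1.factorial * k2.factorial : ℝ) /
              ((k1 - l).factorial * (k2 - l).factorial * (l - p).factorial * p.factorial)) *
            ((Real.sqrt n)⁻¹ ^ (l - p)) *
            empInt P n a X (k1 + k2 - l - p) (avgColored P k1 k2 l p f g) =
      (Real.sqrt a)⁻¹ ^ (k1 + k2) * ((l.factorial : ℝ)⁻¹ *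
        ∑ j1 : Fin l ↪ Fin k1, ∑ j2 : Fin l ↪ Fin k2,
        ∑ S ∈ Finset.powersetCard p (Finset.univ : Finset (Fin l)), (n : ℝ) ^ p *
          ∑ τ : Fin (k1 + k2 - l - p) → Option (Fin n),
        if PInj τ then cw τ * GI P X (coloredFun P k1 k2 l p j1 j2 S f g) τ else 0) := by
    intro l hl p hp
    have hl' : l ≤ min k1 k2 := Nat.lt_succ_iff.1 (Finset.mem_range.1 hl)
    have hp' : p ≤ l := Nat.lt_succ_iff.1 (Finset.mem_range.1 hp)
    have g1 := fun j1 j2 => good_sum P X (Finset.powersetCard p (Finset.univ : Finset (Fin l)))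
      (fun S => coloredFun P k1 k2 l p j1 j2 S f g) (hC l hl p hp j1 j2)
    have g2 := fun j1 => good_sum P X (Finset.univ : Finset (Fin l ↪ Fin k2)) _
      (fun j2 _ => (g1 j1 j2).1)
    have g3 := good_sum P X (Finset.univ : Finset (Fin l ↪ Fin k1)) _ (fun j1 _ => (g2 j1).1)
    have g4 := good_mul P X (((Fintype.card (Fin l ↪ Fin k1) * Fintype.card (Fin l ↪ Fin k2) *
        (Finset.powersetCard p (Finset.univ : Finset (Fin l))).card : ℕ) : ℝ))⁻¹ _ g3.1
    have g5 : ∀ σ, PInj σ → GI P X (avgColored P k1 k2 l p f g) σ =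
        (((Fintype.card (Fin l ↪ Fin k1) * Fintype.card (Fin l ↪ Fin k2) *
        (Finset.powersetCard p (Finset.univ : Finset (Fin l))).card : ℕ) : ℝ))⁻¹ *
        ∑ j1 : Fin l ↪ Fin k1, ∑ j2 : Fin l ↪ Fin k2,
        ∑ S ∈ Finset.powersetCard p (Finset.univ : Finset (Fin l)),
          GI P X (coloredFun P k1 k2 l p j1 j2 S f g) σ := by
      intro σ hσ
      refine (g4.2 σ).trans ?_
      congr 1
      rw [g3.2 σ hσ]
      refine Finset.sum_congr rfl fun j1 _ => ?_
      rw [(g2 j1).2 σ hσ]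
      refine Finset.sum_congr rfl fun j2 _ => ?_
      exact (g1 j1 j2).2 σ hσ
    rw [empInt_eq P hdiag a X (avgColored P k1 k2 l p f g) g4.1 (hinj _)]
    have g6 : ∑ τ : Fin (k1 + k2 - l - p) → Option (Fin n),
        (if PInj τ then cw τ * GI P X (avgColored P k1 k2 l p f g) τ else 0) =
        (((Fintype.card (Fin l ↪ Fin k1) * Fintype.card (Fin l ↪ Fin k2) *
        (Finset.powersetCard p (Finset.univ : Finset (Fin l))).card : ℕ) : ℝ))⁻¹ *
        ∑ j1 : Fin l ↪ Fin k1, ∑ j2 : Fin l ↪ Fin k2,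
        ∑ S ∈ Finset.powersetCard p (Finset.univ : Finset (Fin l)),
          ∑ τ : Fin (k1 + k2 - l - p) → Option (Fin n),
          if PInj τ then cw τ * GI P X (coloredFun P k1 k2 l p j1 j2 S f g) τ else 0 := by
      have : ∀ τ : Fin (k1 + k2 - l - p) → Option (Fin n),
        (if PInj τ then cw τ * GI P X (avgColored P k1 k2 l p f g) τ else 0) =
        (((Fintype.card (Fin l ↪ Fin k1) * Fintype.card (Fin l ↪ Fin k2) *
        (Finset.powersetCard p (Finset.univ : Finset (Fin l))).card : ℕ) : ℝ))⁻¹ *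
        ∑ j1 : Fin l ↪ Fin k1, ∑ j2 : Fin l ↪ Fin k2,
        ∑ S ∈ Finset.powersetCard p (Finset.univ : Finset (Fin l)),
          if PInj τ then cw τ * GI P X (coloredFun P k1 k2 l p j1 j2 S f g) τ else 0 := by
        intro τ
        by_cases hτ : PInj τ
        · simp only [if_pos hτ]
          rw [g5 τ hτ, mul_left_comm]
          simp only [Finset.mul_sum]
        · simp only [if_neg hτ, Finset.sum_const_zero, mul_zero]
      simp_rw [this]
      rw [← Finset.mul_sum, Finset.sum_comm]
      congr 1
      refine Finset.sum_congr rfl fun j1 _ => ?_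
      rw [Finset.sum_comm]
      refine Finset.sum_congr rfl fun j2 _ => ?_
      rw [Finset.sum_comm]
    rw [g6]
    simp only [← Finset.mul_sum]
    generalize (∑ j1 : Fin l ↪ Fin k1, ∑ j2 : Fin l ↪ Fin k2,
        ∑ S ∈ Finset.powersetCard p (Finset.univ : Finset (Fin l)),
          ∑ τ : Fin (k1 + k2 - l - p) → Option (Fin n),
          if PInj τ then cw τ * GI P X (coloredFun P k1 k2 l p j1 j2 S f g) τ else 0) = Z
    have := congrArg (· * Z) (scalar k1 k2 l p n a ha hn hp' (by omega) (by omega))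
    simp only [mul_assoc] at this ⊢
    exact this
  rw [Finset.sum_congr rfl fun l hl => Finset.sum_congr rfl fun p hp => hterm l hl p hp]
  simp only [← Finset.mul_sum]
  rw [empInt_eq P hdiag a X f hf (hinj _), empInt_eq P hdiag a X g hg (hinj _)]
  rw [mul_mul_mul_comm, ← pow_add]
  congr 1
  have hl2 : ∀ l ∈ Finset.range (min k1 k2 + 1),
      ∑ p ∈ Finset.range (l + 1), ∑ j1 : Fin l ↪ Fin k1, ∑ j2 : Fin l ↪ Fin k2,
        ∑ S ∈ Finset.powersetCard p (Finset.univ : Finset (Fin l)), (n : ℝ) ^ p *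
          ∑ τ : Fin (k1 + k2 - l - p) → Option (Fin n),
        (if PInj τ then cw τ * GI P X (coloredFun P k1 k2 l p j1 j2 S f g) τ else 0) =
      ∑ τ1 : Fin k1 → Option (Fin n), ∑ τ2 : Fin k2 → Option (Fin n),
        (if PInj τ1 ∧ PInj τ2 then (cw τ1 * GI P X f τ1) * (cw τ2 * GI P X g τ2) else 0) *
        ∑ j1 : Fin l ↪ Fin k1, ∑ j2 : Fin l ↪ Fin k2, if Exact j1 j2 τ1 τ2 then (1 : ℝ) else 0 := by
    intro l hl
    rw [Finset.sum_comm]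
    have : ∀ j1 : Fin l ↪ Fin k1, ∑ p ∈ Finset.range (l + 1), ∑ j2 : Fin l ↪ Fin k2,
        ∑ S ∈ Finset.powersetCard p (Finset.univ : Finset (Fin l)), (n : ℝ) ^ p *
          ∑ τ : Fin (k1 + k2 - l - p) → Option (Fin n),
        (if PInj τ then cw τ * GI P X (coloredFun P k1 k2 l p j1 j2 S f g) τ else 0) =
        ∑ j2 : Fin l ↪ Fin k2, ∑ τ1 : Fin k1 → Option (Fin n), ∑ τ2 : Fin k2 → Option (Fin n),
          (if PInj τ1 ∧ PInj τ2 then (cw τ1 * GI P X f τ1) * (cw τ2 * GI P X g τ2) else 0) *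
            (if Exact j1 j2 τ1 τ2 then (1 : ℝ) else 0) := by
      intro j1
      rw [Finset.sum_comm]
      refine Finset.sum_congr rfl fun j2 _ => ?_
      rw [diagram_sum P j1 j2 X (hF l hl j1 j2)]
      refine Finset.sum_congr rfl fun τ1 _ => Finset.sum_congr rfl fun τ2 _ => ?_
      by_cases c1 : PInj τ1 <;> by_cases c2 : PInj τ2 <;> by_cases c3 : Exact j1 j2 τ1 τ2 <;>
        simp [c1, c2, c3]
    simp_rw [this, Finset.mul_sum]
    rw [Finset.sum_comm' (t' := Finset.univ) (s' := fun _ => Finset.univ) (by simp)]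
    rw [Finset.sum_comm]
    simp_rw [Finset.sum_comm (s := (Finset.univ : Finset (Fin l ↪ Fin k2)))]
    rw [Finset.sum_comm]
    refine Finset.sum_congr rfl fun τ1 _ => ?_
    rw [Finset.sum_comm]
  have hl3 : ∀ l ∈ Finset.range (min k1 k2 + 1), (l.factorial : ℝ)⁻¹ *
      ∑ p ∈ Finset.range (l + 1), ∑ j1 : Fin l ↪ Fin k1, ∑ j2 : Fin l ↪ Fin k2,
        ∑ S ∈ Finset.powersetCard p (Finset.univ : Finset (Fin l)), (n : ℝ) ^ p *
          ∑ τ : Fin (k1 + k2 - l - p) → Option (Fin n),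
        (if PInj τ then cw τ * GI P X (coloredFun P k1 k2 l p j1 j2 S f g) τ else 0) =
      ∑ τ1 : Fin k1 → Option (Fin n), ∑ τ2 : Fin k2 → Option (Fin n),
        (if PInj τ1 ∧ PInj τ2 then (cw τ1 * GI P X f τ1) * (cw τ2 * GI P X g τ2) else 0) *
        ((l.factorial : ℝ)⁻¹ * ∑ j1 : Fin l ↪ Fin k1, ∑ j2 : Fin l ↪ Fin k2,
          if Exact j1 j2 τ1 τ2 then (1 : ℝ) else 0) := by
    intro l hl
    rw [hl2 l hl, Finset.mul_sum]
    refine Finset.sum_congr rfl fun τ1 _ => ?_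
    rw [Finset.mul_sum]
    refine Finset.sum_congr rfl fun τ2 _ => ?_
    rw [mul_left_comm]
  have hl4 := Finset.sum_congr rfl hl3
  simp only [← Finset.mul_sum] at hl4 ⊢
  rw [hl4, Finset.sum_comm, Finset.sum_mul_sum]
  refine Finset.sum_congr rfl fun τ1 _ => ?_
  rw [Finset.sum_comm]
  refine Finset.sum_congr rfl fun τ2 _ => ?_
  rw [← Finset.mul_sum]
  by_cases c1 : PInj τ1 <;> by_cases c2 : PInj τ2
  · rw [count τ1 τ2 c1 c2]
    simp [c1, c2]
  all_goals simp [c1, c2]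

end final

end DiagramProof

/-- The diagram formula: under Assumption 2.1, for `k1, k2 ≥ 1`,
`f ∈ L²(μ^{k1})`, `g ∈ L²(μ^{k2})` and `n ≥ 1`, almost surely
`I_{k1}^{(n)}(f) I_{k2}^{(n)}(g) = Σ_{l=0}^{min(k1,k2)} Σ_{p=0}^{l} (n/a_n)^{(l+p)/2}
|𝓑(l,p)| n^{-(l-p)/2} I_{k1+k2-l-p}^{(n)}((f ⊗ g)̄_{𝓑(l,p)})`. -/
theorem diagram_formula
    {E Ω : Type*} [MeasurableSpace E] [Nonempty E] [MeasurableSpace Ω]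
    (μ : Measure E) [SigmaFinite μ] [NullSingletonClass μ]
    (a : ℕ → ℝ) (P : ℕ → Measure E) [∀ n, IsProbabilityMeasure (P n)]
    (h21 : Assumption21 μ a P)
    (Pr : Measure Ω) [IsProbabilityMeasure Pr]
    (X : (n : ℕ) → Fin n → Ω → E)
    (hXmeas : ∀ n j, Measurable (X n j))
    (hXlaw : ∀ n : ℕ, 1 ≤ n → ∀ j, Measure.map (X n j) Pr = P n)
    (hXindep : ∀ n : ℕ, iIndepFun (m := fun _ : Fin n => ‹MeasurableSpace E›) (X n) Pr)
    (hdiag : MeasurableSet {p : E × E | p.1 = p.2})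
    (k1 k2 : ℕ) (hk1 : 1 ≤ k1) (hk2 : 1 ≤ k2)
    (f : (Fin k1 → E) → ℝ) (g : (Fin k2 → E) → ℝ)
    (hf : MemLp f 2 (Measure.pi fun _ : Fin k1 => μ))
    (hg : MemLp g 2 (Measure.pi fun _ : Fin k2 => μ))
    (n : ℕ) (hn : 1 ≤ n) :
    ∀ᵐ ω ∂Pr,
      empInt (P n) n (a n) (fun j => X n j ω) k1 f *
          empInt (P n) n (a n) (fun j => X n j ω) k2 g =
        ∑ l ∈ Finset.range (min k1 k2 + 1), ∑ p ∈ Finset.range (l + 1),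
          Real.sqrt ((n : ℝ) / a n) ^ (l + p) *
            ((k1.factorial * k2.factorial : ℝ) /
              ((k1 - l).factorial * (k2 - l).factorial * (l - p).factorial * p.factorial)) *
            ((Real.sqrt n)⁻¹ ^ (l - p)) *
            empInt (P n) n (a n) (fun j => X n j ω) (k1 + k2 - l - p)
              (avgColored (P n) k1 k2 l p f g) := by
  have hpos := h21.2.1 n hn
  have hle := DiagramProof.P_le μ a P h21 n hn
  have hfP : MemLp f 2 (Measure.pi fun _ : Fin k1 => P n) :=
    hf.of_measure_le_smul (by simp) (DiagramProof.pi_le (P n) μ _ hle k1)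
  have hgP : MemLp g 2 (Measure.pi fun _ : Fin k2 => P n) :=
    hg.of_measure_le_smul (by simp) (DiagramProof.pi_le (P n) μ _ hle k2)
  have h0 : ∀ x, P n {x} = 0 := by
    intro x
    have := hle {x}
    simpa using this
  have hlaw : Measure.map (fun ω j => X n j ω) Pr = Measure.pi fun _ : Fin n => P n := by
    rw [(iIndepFun_iff_map_fun_eq_pi_map fun j => (hXmeas n j).aemeasurable).1 (hXindep n)]
    congr 1
    ext1 j
    exact hXlaw n hn j
  have hmX : Measurable (fun ω j => X n j ω) := measurable_pi_lambda _ fun j => hXmeas n j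
  suffices h : ∀ᵐ Y ∂(Measure.pi fun _ : Fin n => P n),
      empInt (P n) n (a n) Y k1 f * empInt (P n) n (a n) Y k2 g =
        ∑ l ∈ Finset.range (min k1 k2 + 1), ∑ p ∈ Finset.range (l + 1),
          Real.sqrt ((n : ℝ) / a n) ^ (l + p) *
            ((k1.factorial * k2.factorial : ℝ) /
              ((k1 - l).factorial * (k2 - l).factorial * (l - p).factorial * p.factorial)) *
            ((Real.sqrt n)⁻¹ ^ (l - p)) *
            empInt (P n) n (a n) Y (k1 + k2 - l - p)
              (avgColored (P n) k1 k2 l p f g) by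
    rw [← hlaw] at h
    exact ae_of_ae_map hmX.aemeasurable h
  have a1 := DiagramProof.ae_good (P n) (n := n) (hfP.integrable (by norm_num))
  have a2 := DiagramProof.ae_good (P n) (n := n) (hgP.integrable (by norm_num))
  have a3 : ∀ᵐ Y ∂(Measure.pi fun _ : Fin n => P n), ∀ l : ℕ,
      ∀ (j1 : Fin l ↪ Fin k1) (j2 : Fin l ↪ Fin k2),
        DiagramProof.Good (P n) Y (DiagramProof.Ff j1 j2 f g) := by
    simp only [ae_all_iff]
    intro l j1 j2
    exact DiagramProof.ae_good (P n) (DiagramProof.integrable_Ff (P n) j1 j2 hfP hgP)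
  have a4 : ∀ᵐ Y ∂(Measure.pi fun _ : Fin n => P n), ∀ l p : ℕ,
      ∀ (j1 : Fin l ↪ Fin k1) (j2 : Fin l ↪ Fin k2) (S : Finset (Fin l)),
      S ∈ Finset.powersetCard p (Finset.univ : Finset (Fin l)) →
        DiagramProof.Good (P n) Y (coloredFun (P n) k1 k2 l p j1 j2 S f g) := by
    simp only [ae_all_iff]
    intro l p j1 j2 S hS
    have hc := (Finset.mem_powersetCard.1 hS).2
    have c1 := DiagramProof.card_AA j1 S
    have c2 := DiagramProof.card_BB j2
    exact DiagramProof.ae_good (P n)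
      (DiagramProof.integrable_colored (P n) j1 j2 S hfP hgP p (by omega))
  have a5 : ∀ᵐ Y ∂(Measure.pi fun _ : Fin n => P n), ∀ k : ℕ, ∀ σ : Fin k → Option (Fin n),
      DiagramProof.PInj σ → ∀ᵐ w ∂(Measure.pi fun _ : Fin k => P n),
        Function.Injective (DiagramProof.val Y w σ) := by
    simp only [ae_all_iff]
    intro k σ hσ
    exact DiagramProof.ae_val (P n) hσ (DiagramProof.ae_inj (P n) hdiag h0 (Fin k))
  filter_upwards [a1, a2, a3, a4, a5] with Y b1 b2 b3 b4 b5
  exact DiagramProof.core (P n) hdiag hn (a n) hpos Y f g b1 b2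
    (fun l _ j1 j2 => b3 l j1 j2) (fun l _ p _ j1 j2 S hS => b4 l p j1 j2 S hS) b5
end
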